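/- arXiv:1401.1530 — 4 statements merged into one kernel-verified Lean document; each statement's English description precedes it below -/
import Mathlib

section
/- Let d ≥ 1 be an integer and let p be a real number with p > max(d,2). For every ε > 0 there exists a constant C_ε > 0, depending only on p, d and ε, such that for all f, g ∈ C_c^∞(ℝ^d) one has ∫_{ℝ^d} |f(x) g(x)|² dx ≤ ε (‖g‖²_{L²(ℝ^d)} + ‖∇g‖²_{L²(ℝ^d)}) + C_ε ‖f‖_{L^p(ℝ^d)}^{2p/(p−d)} ‖g‖²_{L²(ℝ^d)}. -/
open MeasureTheory
open scoped ENNReal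

noncomputable section

/-!
Hölder's inequality with `1/2 = 1/p + 1/q` bounds `‖f g‖₂` by `‖f‖_p ‖g‖_q`, and the
Gagliardo–Nirenberg inequality bounds `‖g‖_q` by `K ‖∇g‖₂^θ ‖g‖₂^(1 - θ)` with `θ = d / p < 1`.
Young's inequality then absorbs the gradient into the `ε` term.

Since `log ‖g‖_q` is convex in `1/q`, the Gagliardo–Nirenberg inequality at an exponent `q₀` implies
it between `2` and `q₀`, so a large enough `q₀` suffices. For `d = 1`, `q₀ = ∞` works by
integrating the derivative of `g²`. For `d = 2`, the embedding of `W^{1,1}` in `L²`, applied to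
successive powers of `g`, gives `q₀ = 2(n + 1)` for every `n`. For `d ≥ 3`, `q₀` is the Sobolev
exponent `2d / (d - 2)`, where `θ = 1`.
-/

open Module
open scoped NNReal

theorem eLpNorm_le_eLpNorm_rpow_mul_eLpNorm_rpow {α F : Type*} [MeasurableSpace α]
    {μ : Measure α} [NormedAddCommGroup F] {f : α → F} (hf : AEStronglyMeasurable f μ)
    {q q₀ q₁ : ℝ≥0∞} {a b : ℝ≥0} (hab : a + b = 1) (hq : q⁻¹ = a * q₀⁻¹ + b * q₁⁻¹) :
    eLpNorm f q μ ≤ eLpNorm f q₀ μ ^ (a : ℝ) * eLpNorm f q₁ μ ^ (b : ℝ) := by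
  obtain rfl | ha := eq_zero_or_pos a
  · obtain rfl : b = 1 := by simpa using hab
    obtain rfl : q = q₁ := by simpa using hq
    simp
  obtain rfl | hb := eq_zero_or_pos b
  · obtain rfl : a = 1 := by simpa using hab
    obtain rfl : q = q₀ := by simpa using hq
    simp
  have eLpNorm_rpow {c : ℝ≥0} (hc : 0 < c) (r : ℝ≥0∞) :
      eLpNorm (fun x ↦ ‖f x‖ ^ (c : ℝ)) (r / c) μ = eLpNorm f r μ ^ (c : ℝ) := by
    rw [eLpNorm_norm_rpow f (NNReal.coe_pos.2 hc), ENNReal.ofReal_coe_nnreal,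
      ENNReal.div_mul_cancel (by simpa using hc.ne') ENNReal.coe_ne_top]
  have hHolder : ENNReal.HolderTriple (q₀ / a) (q₁ / b) q := by
    constructor
    rw [hq, ENNReal.inv_div (by simp) (by simp [ha.ne']),
      ENNReal.inv_div (by simp) (by simp [hb.ne']), div_eq_mul_inv, div_eq_mul_inv]
  calc eLpNorm f q μ
      = eLpNorm ((fun x ↦ ‖f x‖ ^ (a : ℝ)) • fun x ↦ ‖f x‖ ^ (b : ℝ)) q μ := by
        rw [← eLpNorm_norm]
        congr 1 with x
        change ‖f x‖ = ‖f x‖ ^ (a : ℝ) * ‖f x‖ ^ (b : ℝ)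
        rw [← Real.rpow_add_of_nonneg (norm_nonneg _) a.coe_nonneg b.coe_nonneg, ← NNReal.coe_add,
          hab, NNReal.coe_one, Real.rpow_one]
    _ ≤ eLpNorm (fun x ↦ ‖f x‖ ^ (a : ℝ)) (q₀ / a) μ *
          eLpNorm (fun x ↦ ‖f x‖ ^ (b : ℝ)) (q₁ / b) μ :=
        eLpNorm_smul_le_mul_eLpNorm (hf.norm.aemeasurable.pow_const _).aestronglyMeasurable
          (hf.norm.aemeasurable.pow_const _).aestronglyMeasurable
    _ = eLpNorm f q₀ μ ^ (a : ℝ) * eLpNorm f q₁ μ ^ (b : ℝ) := by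
        rw [eLpNorm_rpow ha, eLpNorm_rpow hb]

theorem eLpNorm_pow_succ {α : Type*} [MeasurableSpace α] {μ : Measure α} (f : α → ℝ) (q : ℝ≥0∞)
    (n : ℕ) : eLpNorm (fun x ↦ f x ^ (n + 1)) q μ = eLpNorm f (q * (n + 1)) μ ^ (n + 1) := by
  have hn : (0 : ℝ) < (n + 1 : ℕ) := by positivity
  have h := eLpNorm_norm_rpow (p := q) (μ := μ) f hn
  simp only [Real.rpow_natCast, ENNReal.rpow_natCast, ← norm_pow, ENNReal.ofReal_natCast] at h
  rw [← Nat.cast_add_one, ← h, eLpNorm_norm fun x ↦ f x ^ (n + 1)]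

theorem lpNorm_two_sq {α F : Type*} [MeasurableSpace α] {μ : Measure α} [NormedAddCommGroup F]
    {f : α → F} (hf : AEStronglyMeasurable f μ) : lpNorm f 2 μ ^ 2 = ∫ x, ‖f x‖ ^ 2 ∂μ := by
  have hroot : lpNorm f 2 μ = √(∫ x, ‖f x‖ ^ 2 ∂μ) := by
    simpa [Real.sqrt_eq_rpow] using lpNorm_nnreal_eq_integral_norm_rpow (p := 2) two_ne_zero hf
  rw [hroot, Real.sq_sqrt (by positivity)]

theorem exists_mul_add_mul_inv_eq_inv {q₀ q₁ q : ℝ≥0∞} (h₀ : q₀ ≠ 0) (h₀q : q₀ ≤ q)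
    (hq₁ : q ≤ q₁) : ∃ a b : ℝ≥0, a + b = 1 ∧ q⁻¹ = a * q₀⁻¹ + b * q₁⁻¹ := by
  have hq : q⁻¹ ≠ ∞ := by simpa using (h₀.bot_lt.trans_le h₀q).ne'
  have hq₁' : q₁⁻¹ ≠ ∞ := by simpa using (h₀.bot_lt.trans_le (h₀q.trans hq₁)).ne'
  lift q₀⁻¹ to ℝ≥0 using (by simpa using h₀) with r₀ hr₀
  lift q₁⁻¹ to ℝ≥0 using hq₁' with r₁ hr₁
  lift q⁻¹ to ℝ≥0 using hq with r hr
  rw [← ENNReal.inv_le_inv, ← hr, ← hr₀, ENNReal.coe_le_coe] at h₀q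
  rw [← ENNReal.inv_le_inv, ← hr, ← hr₁, ENNReal.coe_le_coe] at hq₁
  obtain ⟨b, a, -, -, hab, h⟩ := NNReal.Icc_subset_segment ⟨hq₁, h₀q⟩
  refine ⟨a, b, by rwa [add_comm], ?_⟩
  rw [← h]
  push_cast
  simp [add_comm]

theorem mul_rpow_mul_rpow_le_add {θ ε L W A : ℝ} (hθ₀ : 0 ≤ θ) (hθ₁ : θ < 1) (hε : 0 < ε)
    (hL : 0 ≤ L) (hW : 0 ≤ W) (hA : 0 ≤ A) :
    L * (W ^ θ * A ^ (1 - θ)) ≤ ε * W + (L * ε ^ (-θ)) ^ (1 / (1 - θ)) * A := by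
  have hθ : 0 < 1 - θ := sub_pos.2 hθ₁
  set M := (L * ε ^ (-θ)) ^ (1 / (1 - θ)) with hM
  have hM_nonneg : 0 ≤ M := by positivity
  have hM_rpow : M ^ (1 - θ) = L * ε ^ (-θ) := by
    rw [hM, one_div, Real.rpow_inv_rpow (by positivity) hθ.ne']
  calc L * (W ^ θ * A ^ (1 - θ)) = (ε * W) ^ θ * (M * A) ^ (1 - θ) := by
        rw [Real.mul_rpow hε.le hW, Real.mul_rpow hM_nonneg hA, hM_rpow, Real.rpow_neg hε.le]
        field_simp
    _ ≤ θ * (ε * W) + (1 - θ) * (M * A) :=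
        Real.geom_mean_le_arith_mean2_weighted hθ₀ hθ.le (by positivity) (by positivity) (by ring)
    _ ≤ 1 * (ε * W) + 1 * (M * A) := by
        gcongr
        linarith
    _ = ε * W + M * A := by ring

section GagliardoNirenberg

variable {E : Type*} [NormedAddCommGroup E] [NormedSpace ℝ E] [MeasurableSpace E]

/-- The exponent `d (1/2 - 1/q)` which dilation forces on `‖∇g‖₂` in the Gagliardo–Nirenberg
inequality for `‖g‖_q` in dimension `d`. The value `d / 2` is meant for `q = ∞`, and is junk for
`q = 0`. -/
def gagliardoNirenbergExponent (d : ℕ) (q : ℝ≥0∞) : ℝ :=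
  d * (1 / 2 - (q⁻¹).toReal)

theorem exists_le_gagliardoNirenbergExponent_eq_one {d : ℕ} (hd : 2 < d) {q : ℝ≥0∞}
    (hq : gagliardoNirenbergExponent d q < 1) :
    ∃ q₀, q ≤ q₀ ∧ gagliardoNirenbergExponent d q₀ = 1 := by
  have hd' : (2 : ℝ) < d := by exact_mod_cast hd
  obtain ⟨r, hr⟩ : ∃ r : ℝ, r = 1 / 2 - 1 / d := ⟨_, rfl⟩
  have hr_nonneg : 0 ≤ r := by
    rw [hr, sub_nonneg]
    exact one_div_le_one_div_of_le two_pos hd'.le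
  have hexp : gagliardoNirenbergExponent d (ENNReal.ofReal r)⁻¹ = 1 := by
    rw [gagliardoNirenbergExponent, inv_inv, ENNReal.toReal_ofReal hr_nonneg, hr]
    field_simp
    ring
  refine ⟨(ENNReal.ofReal r)⁻¹, ?_, hexp⟩
  rw [← hexp, gagliardoNirenbergExponent, gagliardoNirenbergExponent, inv_inv,
    ENNReal.toReal_ofReal hr_nonneg] at hq
  have hrq : r ≤ (q⁻¹).toReal := by linarith [lt_of_mul_lt_mul_left hq (by positivity)]
  rw [← ENNReal.inv_le_inv, inv_inv]
  exact ENNReal.ofReal_le_of_le_toReal hrq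

/-- The Gagliardo–Nirenberg inequality `‖g‖_q ≤ K ‖∇g‖₂^θ ‖g‖₂^(1 - θ)` for the exponent `q`, with
`θ` the `gagliardoNirenbergExponent` and `K` independent of `g ∈ C¹_c(E)`. -/
def GagliardoNirenberg (μ : Measure E) (q : ℝ≥0∞) : Prop :=
  ∃ K : ℝ≥0, ∀ g : E → ℝ, ContDiff ℝ 1 g → HasCompactSupport g →
    eLpNorm g q μ ≤ K * (eLpNorm (fderiv ℝ g) 2 μ ^ gagliardoNirenbergExponent (finrank ℝ E) q *
      eLpNorm g 2 μ ^ (1 - gagliardoNirenbergExponent (finrank ℝ E) q))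

variable {μ : Measure E}

theorem gagliardoNirenberg_of_eLpNorm_pow_le {r : ℝ≥0∞} {n : ℕ} {K : ℝ≥0}
    (hexp : gagliardoNirenbergExponent (finrank ℝ E) (r * (n + 1)) = n / (n + 1))
    (h : ∀ g : E → ℝ, ContDiff ℝ 1 g → HasCompactSupport g →
      eLpNorm (fun x ↦ g x ^ (n + 1)) r μ ≤ K * (eLpNorm (fderiv ℝ g) 2 μ ^ n * eLpNorm g 2 μ)) :
    GagliardoNirenberg μ (r * (n + 1)) := by
  refine ⟨K ^ (n + 1 : ℝ)⁻¹, fun g hg h2g ↦ ?_⟩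
  have hn : (0 : ℝ) < n + 1 := by positivity
  have hn' : (0 : ℝ) ≤ (n + 1 : ℝ)⁻¹ := by positivity
  have hexp' : 1 - (n : ℝ) / (n + 1) = (n + 1 : ℝ)⁻¹ := by field_simp; ring
  have hpow := h g hg h2g
  rw [eLpNorm_pow_succ, ← ENNReal.rpow_natCast, Nat.cast_add_one,
    ← ENNReal.le_rpow_inv_iff hn, ENNReal.mul_rpow_of_nonneg _ _ hn',
    ENNReal.mul_rpow_of_nonneg _ _ hn', ← ENNReal.rpow_natCast, ← ENNReal.rpow_mul] at hpow
  rwa [hexp, hexp', ENNReal.coe_rpow_of_nonneg _ hn', div_eq_mul_inv]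

variable [BorelSpace E]

theorem GagliardoNirenberg.of_le {q q₀ : ℝ≥0∞} (h : GagliardoNirenberg μ q₀)
    (hq₀ : gagliardoNirenbergExponent (finrank ℝ E) q₀ ≤ 1) (h2q : 2 ≤ q) (hqq₀ : q ≤ q₀) :
    GagliardoNirenberg μ q := by
  obtain ⟨K, hK⟩ := h
  obtain ⟨a, b, hab, hq⟩ := exists_mul_add_mul_inv_eq_inv two_ne_zero h2q hqq₀
  have hab' : (a : ℝ) + b = 1 := by exact_mod_cast hab
  set θ₀ := gagliardoNirenbergExponent (finrank ℝ E) q₀ with hθ₀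
  set θ := gagliardoNirenbergExponent (finrank ℝ E) q with hθ
  have hθb : θ₀ * b = θ := by
    have hq_real : (q⁻¹).toReal = a / 2 + b * (q₀⁻¹).toReal := by
      have hq₀_inv : q₀⁻¹ ≠ ∞ := by
        simpa using (two_pos.trans_le (h2q.trans hqq₀)).ne'
      rw [hq, ENNReal.toReal_add (by finiteness) (by finiteness)]
      simp [div_eq_mul_inv]
    rw [hθ, hθ₀, gagliardoNirenbergExponent, gagliardoNirenbergExponent, hq_real]
    linear_combination (finrank ℝ E / 2 : ℝ) * hab'
  refine ⟨K ^ (b : ℝ), fun g hg h2g ↦ ?_⟩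
  set A := eLpNorm g 2 μ
  set B := eLpNorm (fderiv ℝ g) 2 μ
  calc eLpNorm g q μ ≤ A ^ (a : ℝ) * eLpNorm g q₀ μ ^ (b : ℝ) :=
        eLpNorm_le_eLpNorm_rpow_mul_eLpNorm_rpow hg.continuous.aestronglyMeasurable hab hq
    _ ≤ A ^ (a : ℝ) * (K * (B ^ θ₀ * A ^ (1 - θ₀))) ^ (b : ℝ) := by
        gcongr
        exact hK g hg h2g
    _ = K ^ (b : ℝ) * (B ^ (θ₀ * b) * A ^ (a + (1 - θ₀) * b)) := by
        rw [ENNReal.mul_rpow_of_nonneg _ _ b.coe_nonneg,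
          ENNReal.mul_rpow_of_nonneg _ _ b.coe_nonneg, ← ENNReal.rpow_mul, ← ENNReal.rpow_mul,
          ENNReal.rpow_add_of_nonneg _ _ a.coe_nonneg (mul_nonneg (sub_nonneg.2 hq₀) b.coe_nonneg)]
        ring
    _ = (K ^ (b : ℝ) : ℝ≥0) * (B ^ θ * A ^ (1 - θ)) := by
        rw [ENNReal.coe_rpow_of_nonneg _ b.coe_nonneg, ← hθb]
        congr 3
        linear_combination hab'

variable [FiniteDimensional ℝ E]

theorem eLpNorm_fderiv_pow_le {g : E → ℝ} (hg : ContDiff ℝ 1 g) (n : ℕ) :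
    eLpNorm (fderiv ℝ fun x ↦ g x ^ (n + 1)) 1 μ ≤
      (n + 1) * (eLpNorm (fun x ↦ g x ^ n) 2 μ * eLpNorm (fderiv ℝ g) 2 μ) := by
  have hfderiv : (fderiv ℝ fun x ↦ g x ^ (n + 1)) =
      (((n + 1 : ℕ) : ℝ) • fun x ↦ g x ^ n) • fderiv ℝ g := by
    ext1 x
    rw [fderiv_fun_pow _ (hg.differentiable one_ne_zero x), Nat.add_sub_cancel, nsmul_eq_mul]
    rfl
  calc eLpNorm (fderiv ℝ fun x ↦ g x ^ (n + 1)) 1 μ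
      ≤ eLpNorm (((n + 1 : ℕ) : ℝ) • fun x ↦ g x ^ n) 2 μ * eLpNorm (fderiv ℝ g) 2 μ := by
        rw [hfderiv]
        exact eLpNorm_smul_le_mul_eLpNorm (hg.continuous_fderiv one_ne_zero).aestronglyMeasurable
          ((hg.continuous.pow n).aestronglyMeasurable.const_smul _)
    _ = (n + 1) * (eLpNorm (fun x ↦ g x ^ n) 2 μ * eLpNorm (fderiv ℝ g) 2 μ) := by
        rw [eLpNorm_const_smul, Real.enorm_natCast, Nat.cast_add_one, mul_assoc]

variable [μ.IsAddHaarMeasure]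

variable (μ) in
theorem exists_eLpNorm_top_le_eLpNorm_fderiv_one (hE : finrank ℝ E = 1)
    (F : Type*) [NormedAddCommGroup F] [NormedSpace ℝ F] :
    ∃ K : ℝ≥0, ∀ u : E → F, ContDiff ℝ 1 u → HasCompactSupport u →
      eLpNorm u ∞ μ ≤ K * eLpNorm (fderiv ℝ u) 1 μ := by
  let e : ℝ ≃L[ℝ] E := ContinuousLinearEquiv.ofFinrankEq (by rw [finrank_self, hE])
  let c : ℝ≥0 := (volume.map e).addHaarScalarFactor μ
  have hc : volume.map e = c • μ := Measure.isAddLeftInvariant_eq_smul _ _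
  refine ⟨‖e 1‖₊ * c, fun u hu h2u ↦ ?_⟩
  have hderiv (t : ℝ) : ‖deriv (u ∘ e) t‖ₑ ≤ ‖e 1‖ₑ * ‖fderiv ℝ u (e t)‖ₑ := by
    have h : HasDerivAt (u ∘ e) (fderiv ℝ u (e t) (e 1)) t :=
      (hu.differentiable one_ne_zero (e t)).hasFDerivAt.comp_hasDerivAt t e.hasFDerivAt.hasDerivAt
    rw [h.deriv, mul_comm]
    exact ContinuousLinearMap.le_opENorm _ _
  refine eLpNormEssSup_le_of_ae_enorm_bound (.of_forall fun x ↦ ?_)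
  calc ‖u x‖ₑ = ‖(u ∘ e) (e.symm x)‖ₑ := by simp
    _ ≤ ∫⁻ t in Set.Iic (e.symm x), ‖deriv (u ∘ e) t‖ₑ :=
      (h2u.comp_homeomorph e.toHomeomorph).enorm_le_lintegral_Ici_deriv (hu.comp e.contDiff) _
    _ ≤ ∫⁻ t, ‖deriv (u ∘ e) t‖ₑ := setLIntegral_le_lintegral _ _
    _ ≤ ∫⁻ t, ‖e 1‖ₑ * ‖fderiv ℝ u (e t)‖ₑ := lintegral_mono hderiv
    _ = ‖e 1‖ₑ * ∫⁻ y, ‖fderiv ℝ u y‖ₑ ∂(volume.map e) := by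
      rw [lintegral_const_mul' _ _ (by finiteness)]
      congr 1
      exact (lintegral_map_equiv (fun y ↦ ‖fderiv ℝ u y‖ₑ) e.toHomeomorph.toMeasurableEquiv).symm
    _ = (‖e 1‖₊ * c : ℝ≥0) * eLpNorm (fderiv ℝ u) 1 μ := by
      rw [hc, lintegral_smul_measure, eLpNorm_one_eq_lintegral_enorm, ENNReal.coe_mul, mul_assoc]
      rfl

theorem gagliardoNirenberg_top_of_finrank_eq_one (hE : finrank ℝ E = 1) :
    GagliardoNirenberg μ ∞ := by
  obtain ⟨K, hK⟩ := exists_eLpNorm_top_le_eLpNorm_fderiv_one μ hE ℝ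
  have hexp : gagliardoNirenbergExponent (finrank ℝ E) (∞ * ((1 : ℕ) + 1)) =
      (1 : ℕ) / ((1 : ℕ) + 1) := by
    norm_num [gagliardoNirenbergExponent, hE]
  have hgn : GagliardoNirenberg μ (∞ * ((1 : ℕ) + 1)) := by
    refine gagliardoNirenberg_of_eLpNorm_pow_le (K := K * 2) hexp fun g hg h2g ↦ ?_
    calc eLpNorm (fun x ↦ g x ^ (1 + 1)) ∞ μ
        ≤ K * eLpNorm (fderiv ℝ fun x ↦ g x ^ (1 + 1)) 1 μ :=
          hK _ (hg.pow _) (h2g.comp_left (g := (· ^ (1 + 1))) (by simp))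
      _ ≤ K * (((1 : ℕ) + 1) * (eLpNorm (fun x ↦ g x ^ 1) 2 μ * eLpNorm (fderiv ℝ g) 2 μ)) := by
          gcongr
          exact eLpNorm_fderiv_pow_le hg 1
      _ = (K * 2 : ℝ≥0) * (eLpNorm (fderiv ℝ g) 2 μ ^ 1 * eLpNorm g 2 μ) := by
          simp only [pow_one]
          push_cast
          ring
  rwa [ENNReal.top_mul (by simp)] at hgn

theorem exists_eLpNorm_pow_le_of_finrank_eq_two (hE : finrank ℝ E = 2) (n : ℕ) :
    ∃ K : ℝ≥0, ∀ g : E → ℝ, ContDiff ℝ 1 g → HasCompactSupport g →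
      eLpNorm (fun x ↦ g x ^ (n + 1)) 2 μ ≤
        K * (eLpNorm (fderiv ℝ g) 2 μ ^ n * eLpNorm g 2 μ) := by
  induction n with
  | zero => exact ⟨1, fun g _ _ ↦ by simp⟩
  | succ n ih =>
    obtain ⟨K, hK⟩ := ih
    have hconj : NNReal.HolderConjugate (finrank ℝ E) 2 := by
      rw [hE]
      exact NNReal.HolderConjugate.two_two
    let S := eLpNormLESNormFDerivOneConst μ 2
    refine ⟨S * (n + 2) * K, fun g hg h2g ↦ ?_⟩
    calc eLpNorm (fun x ↦ g x ^ (n + 2)) 2 μ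
        ≤ S * eLpNorm (fderiv ℝ fun x ↦ g x ^ (n + 2)) 1 μ :=
          eLpNorm_le_eLpNorm_fderiv_one μ (hg.pow _) (h2g.comp_left (g := (· ^ (n + 2))) (by simp))
            hconj
      _ ≤ S * (((n + 1 : ℕ) + 1) *
            (eLpNorm (fun x ↦ g x ^ (n + 1)) 2 μ * eLpNorm (fderiv ℝ g) 2 μ)) := by
          gcongr
          exact eLpNorm_fderiv_pow_le hg (n + 1)
      _ ≤ S * (((n + 1 : ℕ) + 1) * (K * (eLpNorm (fderiv ℝ g) 2 μ ^ n * eLpNorm g 2 μ) *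
            eLpNorm (fderiv ℝ g) 2 μ)) := by
          gcongr
          exact hK g hg h2g
      _ = (S * (n + 2) * K : ℝ≥0) * (eLpNorm (fderiv ℝ g) 2 μ ^ (n + 1) * eLpNorm g 2 μ) := by
          push_cast
          ring

theorem gagliardoNirenberg_of_finrank_eq_two (hE : finrank ℝ E = 2) (n : ℕ) :
    GagliardoNirenberg μ (2 * (n + 1)) := by
  obtain ⟨K, hK⟩ := exists_eLpNorm_pow_le_of_finrank_eq_two (μ := μ) hE n
  refine gagliardoNirenberg_of_eLpNorm_pow_le ?_ hK
  rw [gagliardoNirenbergExponent, hE, ENNReal.toReal_inv, ENNReal.toReal_mul,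
    ← Nat.cast_add_one, ENNReal.toReal_natCast, ENNReal.toReal_ofNat]
  push_cast
  field_simp
  ring

theorem gagliardoNirenberg_of_exponent_eq_one (hE : 2 < finrank ℝ E) {q : ℝ≥0∞}
    (hq : gagliardoNirenbergExponent (finrank ℝ E) q = 1) : GagliardoNirenberg μ q := by
  have hE' : (2 : ℝ) < finrank ℝ E := by exact_mod_cast hE
  have hq_top : q ≠ ∞ := by
    rintro rfl
    simp only [gagliardoNirenbergExponent, ENNReal.inv_top, ENNReal.toReal_zero] at hq
    linarith
  lift q to ℝ≥0 using hq_top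
  refine ⟨eLpNormLESNormFDerivOfEqInnerConst μ 2, fun g hg h2g ↦ ?_⟩
  rw [hq, sub_self, ENNReal.rpow_one, ENNReal.rpow_zero, mul_one]
  refine eLpNorm_le_eLpNorm_fderiv_of_eq_inner μ hg h2g one_le_two (by omega) ?_
  rw [gagliardoNirenbergExponent, ENNReal.toReal_inv, ENNReal.coe_toReal] at hq
  push_cast
  field_simp at hq ⊢
  linear_combination -hq

theorem gagliardoNirenberg_of_exponent_lt_one [Nontrivial E] {q : ℝ≥0∞} (h2q : 2 ≤ q)
    (hq : gagliardoNirenbergExponent (finrank ℝ E) q < 1) : GagliardoNirenberg μ q := by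
  suffices ∃ q₀, q ≤ q₀ ∧ gagliardoNirenbergExponent (finrank ℝ E) q₀ ≤ 1 ∧
      GagliardoNirenberg μ q₀ by
    obtain ⟨q₀, hqq₀, hq₀, h⟩ := this
    exact h.of_le hq₀ h2q hqq₀
  have hE_pos : 0 < finrank ℝ E := finrank_pos
  obtain hE | hE | hE : finrank ℝ E = 1 ∨ finrank ℝ E = 2 ∨ 2 < finrank ℝ E := by omega
  · refine ⟨∞, le_top, ?_, gagliardoNirenberg_top_of_finrank_eq_one hE⟩
    norm_num [gagliardoNirenbergExponent, hE]
  · have hq_top : q ≠ ∞ := by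
      rintro rfl
      norm_num [gagliardoNirenbergExponent, hE] at hq
    obtain ⟨n, hn⟩ := ENNReal.exists_nat_gt hq_top
    refine ⟨2 * (n + 1), ?_, ?_, gagliardoNirenberg_of_finrank_eq_two hE n⟩
    · calc q ≤ n := hn.le
        _ ≤ 2 * (n + 1) := by exact_mod_cast (by omega : n ≤ 2 * (n + 1))
    · rw [gagliardoNirenbergExponent, hE]
      push_cast
      linarith [ENNReal.toReal_nonneg (a := (2 * (n + 1 : ℝ≥0∞))⁻¹)]
  · obtain ⟨q₀, hqq₀, hq₀⟩ := exists_le_gagliardoNirenbergExponent_eq_one hE hq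
    exact ⟨q₀, hqq₀, hq₀.le, gagliardoNirenberg_of_exponent_eq_one hE hq₀⟩

theorem exists_eLpNorm_mul_two_le [Nontrivial E] {p : ℝ≥0∞} (hp : 2 ≤ p)
    (hEp : finrank ℝ E * (p⁻¹).toReal < 1) :
    ∃ K : ℝ≥0, ∀ f g : E → ℝ, AEStronglyMeasurable f μ → ContDiff ℝ 1 g → HasCompactSupport g →
      eLpNorm (f * g) 2 μ ≤ eLpNorm f p μ *
        (K * (eLpNorm (fderiv ℝ g) 2 μ ^ (finrank ℝ E * (p⁻¹).toReal) *
          eLpNorm g 2 μ ^ (1 - finrank ℝ E * (p⁻¹).toReal))) := by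
  obtain ⟨q, hq⟩ : ∃ q : ℝ≥0∞, q⁻¹ = 2⁻¹ - p⁻¹ := ⟨(2⁻¹ - p⁻¹)⁻¹, inv_inv _⟩
  have hp_inv : p⁻¹ ≤ 2⁻¹ := ENNReal.inv_le_inv.2 hp
  have hHolder : ENNReal.HolderTriple p q 2 :=
    ⟨by rw [hq, add_tsub_cancel_of_le hp_inv]⟩
  have h2q : 2 ≤ q := by
    rw [← ENNReal.inv_le_inv, hq]
    exact tsub_le_self
  have hexp : gagliardoNirenbergExponent (finrank ℝ E) q = finrank ℝ E * (p⁻¹).toReal := by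
    rw [gagliardoNirenbergExponent, hq, ENNReal.toReal_sub_of_le hp_inv (by simp)]
    simp
  obtain ⟨K, hK⟩ := gagliardoNirenberg_of_exponent_lt_one (μ := μ) h2q (hexp.trans_lt hEp)
  refine ⟨K, fun f g hf hg h2g ↦ ?_⟩
  rw [← hexp]
  refine (?_ : eLpNorm (f * g) 2 μ ≤ eLpNorm f p μ * eLpNorm g q μ).trans ?_
  · rw [← smul_eq_mul]
    exact eLpNorm_smul_le_mul_eLpNorm hg.continuous.aestronglyMeasurable hf
  · gcongr
    exact hK g hg h2g

theorem exists_lpNorm_mul_two_le [Nontrivial E] {p : ℝ≥0∞} (hp : 2 ≤ p)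
    (hEp : finrank ℝ E * (p⁻¹).toReal < 1) :
    ∃ K : ℝ≥0, ∀ f g : E → ℝ, MemLp f p μ → ContDiff ℝ 1 g → HasCompactSupport g →
      lpNorm (f * g) 2 μ ≤ lpNorm f p μ *
        (K * (lpNorm (fderiv ℝ g) 2 μ ^ (finrank ℝ E * (p⁻¹).toReal) *
          lpNorm g 2 μ ^ (1 - finrank ℝ E * (p⁻¹).toReal))) := by
  obtain ⟨K, hK⟩ := exists_eLpNorm_mul_two_le (μ := μ) hp hEp
  refine ⟨K, fun f g hf hg h2g ↦ ?_⟩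
  have hg_memLp : MemLp g 2 μ := hg.continuous.memLp_of_hasCompactSupport h2g
  have hg'_memLp : MemLp (fderiv ℝ g) 2 μ :=
    (hg.continuous_fderiv one_ne_zero).memLp_of_hasCompactSupport (h2g.fderiv ℝ)
  have h_ne_top : eLpNorm f p μ *
      (K * (eLpNorm (fderiv ℝ g) 2 μ ^ (finrank ℝ E * (p⁻¹).toReal) *
        eLpNorm g 2 μ ^ (1 - finrank ℝ E * (p⁻¹).toReal))) ≠ ∞ := by
    have hA := hg_memLp.eLpNorm_ne_top
    have hB := hg'_memLp.eLpNorm_ne_top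
    have hN := hf.eLpNorm_ne_top
    have hθ := sub_nonneg.2 hEp.le
    finiteness
  simpa only [ENNReal.toReal_mul, ← ENNReal.toReal_rpow, ENNReal.coe_toReal, toReal_eLpNorm hf.1,
    toReal_eLpNorm hg_memLp.1, toReal_eLpNorm hg'_memLp.1,
    toReal_eLpNorm (hf.1.mul hg_memLp.1)] using ENNReal.toReal_mono h_ne_top (hK f g hf.1 hg h2g)

theorem exists_integral_mul_sq_le [Nontrivial E] {p : ℝ} (hp : 2 ≤ p) (hEp : finrank ℝ E < p) :
    ∃ K : ℝ, ∀ f g : E → ℝ, MemLp f (ENNReal.ofReal p) μ →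
      ContDiff ℝ 1 g → HasCompactSupport g →
      ∫ x, |f x * g x| ^ 2 ∂μ ≤ (K * (∫ x, |f x| ^ p ∂μ) ^ (1 / p)) ^ 2 *
        ((∫ x, ‖fderiv ℝ g x‖ ^ 2 ∂μ) ^ (finrank ℝ E / p : ℝ) *
          (∫ x, g x ^ 2 ∂μ) ^ (1 - finrank ℝ E / p : ℝ)) := by
  have hp_pos : 0 < p := by linarith
  have hp_toReal : (ENNReal.ofReal p).toReal = p := ENNReal.toReal_ofReal hp_pos.le
  have hθ : finrank ℝ E * ((ENNReal.ofReal p)⁻¹).toReal = finrank ℝ E / p := by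
    rw [ENNReal.toReal_inv, hp_toReal, div_eq_mul_inv]
  obtain ⟨K, hK⟩ := exists_lpNorm_mul_two_le (μ := μ) (p := ENNReal.ofReal p)
    (by simpa using ENNReal.ofReal_le_ofReal hp) (by rwa [hθ, div_lt_one hp_pos])
  rw [hθ] at hK
  set θ : ℝ := finrank ℝ E / p
  refine ⟨K, fun f g hf hg h2g ↦ ?_⟩
  have hg_meas : AEStronglyMeasurable g μ := hg.continuous.aestronglyMeasurable
  have hg'_meas : AEStronglyMeasurable (fderiv ℝ g) μ :=
    (hg.continuous_fderiv one_ne_zero).aestronglyMeasurable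
  have hf_lpNorm : lpNorm f (ENNReal.ofReal p) μ = (∫ x, |f x| ^ p ∂μ) ^ (1 / p) := by
    rw [lpNorm_eq_integral_norm_rpow_toReal (by simpa using hp_pos) ENNReal.ofReal_ne_top hf.1,
      hp_toReal, one_div]
    simp only [Real.norm_eq_abs]
  have hg_lpNorm : lpNorm g 2 μ ^ 2 = ∫ x, g x ^ 2 ∂μ := by
    simpa only [Real.norm_eq_abs, sq_abs] using lpNorm_two_sq hg_meas
  calc ∫ x, |f x * g x| ^ 2 ∂μ = lpNorm (f * g) 2 μ ^ 2 :=
        (lpNorm_two_sq (hf.1.mul hg_meas)).symm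
    _ ≤ (lpNorm f (ENNReal.ofReal p) μ *
          (K * (lpNorm (fderiv ℝ g) 2 μ ^ θ * lpNorm g 2 μ ^ (1 - θ)))) ^ 2 := by
        gcongr
        · exact lpNorm_nonneg
        · exact hK f g hf hg h2g
    _ = (K * lpNorm f (ENNReal.ofReal p) μ) ^ 2 *
          ((lpNorm (fderiv ℝ g) 2 μ ^ 2) ^ θ * (lpNorm g 2 μ ^ 2) ^ (1 - θ)) := by
        rw [← Real.rpow_pow_comm lpNorm_nonneg, ← Real.rpow_pow_comm lpNorm_nonneg]
        ring
    _ = _ := by rw [hf_lpNorm, hg_lpNorm, lpNorm_two_sq hg'_meas]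

end GagliardoNirenberg

theorem interpolation_inequality_general {E : Type*} [NormedAddCommGroup E] [NormedSpace ℝ E]
    [FiniteDimensional ℝ E] [Nontrivial E] [MeasurableSpace E] [BorelSpace E] (μ : Measure E)
    [μ.IsAddHaarMeasure] {p : ℝ} (hp : 2 ≤ p) (hEp : finrank ℝ E < p) {ε : ℝ} (hε : 0 < ε) :
    ∃ C : ℝ, 0 < C ∧ ∀ f g : E → ℝ, MemLp f (ENNReal.ofReal p) μ →
      ContDiff ℝ 1 g → HasCompactSupport g →
      ∫ x, |f x * g x| ^ 2 ∂μ ≤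
        ε * ((∫ x, g x ^ 2 ∂μ) + ∫ x, ‖fderiv ℝ g x‖ ^ 2 ∂μ) +
          C * ((∫ x, |f x| ^ p ∂μ) ^ (1 / p)) ^ (2 * p / (p - (finrank ℝ E : ℝ))) *
            ∫ x, g x ^ 2 ∂μ := by
  obtain ⟨K, hK⟩ := exists_integral_mul_sq_le (μ := μ) hp hEp
  have hp_pos : 0 < p := by linarith
  set θ : ℝ := finrank ℝ E / p with hθ
  have hθ₀ : 0 ≤ θ := by positivity
  have hθ₁ : θ < 1 := (div_lt_one hp_pos).2 hEp
  have hexp : 2 * (1 / (1 - θ)) = 2 * p / (p - finrank ℝ E) := by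
    have : p - finrank ℝ E ≠ 0 := (sub_pos.2 hEp).ne'
    rw [hθ]
    field_simp
  set c : ℝ := (K ^ 2 * ε ^ (-θ)) ^ (1 / (1 - θ))
  have hc : 0 ≤ c := by positivity
  refine ⟨c + 1, add_pos_of_nonneg_of_pos hc one_pos, fun f g hf hg h2g ↦ ?_⟩
  set N := (∫ x, |f x| ^ p ∂μ) ^ (1 / p)
  set A := ∫ x, g x ^ 2 ∂μ
  set W := ∫ x, ‖fderiv ℝ g x‖ ^ 2 ∂μ
  have hN : 0 ≤ N := by positivity
  have hA : 0 ≤ A := by positivity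
  have hW : 0 ≤ W := by positivity
  calc ∫ x, |f x * g x| ^ 2 ∂μ ≤ (K * N) ^ 2 * (W ^ θ * A ^ (1 - θ)) := hK f g hf hg h2g
    _ ≤ ε * W + ((K * N) ^ 2 * ε ^ (-θ)) ^ (1 / (1 - θ)) * A :=
        mul_rpow_mul_rpow_le_add hθ₀ hθ₁ hε (by positivity) hW hA
    _ = ε * W + c * N ^ (2 * p / (p - finrank ℝ E)) * A := by
        rw [mul_pow, mul_right_comm, Real.mul_rpow (by positivity) (by positivity),
          ← Real.rpow_natCast N, ← Real.rpow_mul hN, Nat.cast_ofNat, hexp]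
    _ ≤ ε * (A + W) + (c + 1) * N ^ (2 * p / (p - finrank ℝ E)) * A := by
        gcongr
        · exact le_add_of_nonneg_left hA
        · exact le_add_of_nonneg_right zero_le_one

theorem interpolation_inequality (d : ℕ) (hd : 1 ≤ d) (p : ℝ)
    (hp : max (d : ℝ) 2 < p) :
    ∀ ε : ℝ, 0 < ε → ∃ C : ℝ, 0 < C ∧
      ∀ f g : EuclideanSpace ℝ (Fin d) → ℝ,
        ContDiff ℝ (⊤ : ℕ∞) f → HasCompactSupport f →
        ContDiff ℝ (⊤ : ℕ∞) g → HasCompactSupport g →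
        ∫ x, |f x * g x| ^ 2 ≤
          ε * ((∫ x, g x ^ 2) + ∫ x, ‖fderiv ℝ g x‖ ^ 2) +
            C * ((∫ x, |f x| ^ p) ^ (1 / p)) ^ (2 * p / (p - (d : ℝ))) *
              ∫ x, g x ^ 2 := by
  intro ε hε
  obtain ⟨hdp, h2p⟩ := max_lt_iff.1 hp
  have : NeZero d := ⟨by omega⟩
  obtain ⟨C, hC, h⟩ := interpolation_inequality_general
    (volume : Measure (EuclideanSpace ℝ (Fin d))) h2p.le (by simpa using hdp) hε
  rw [finrank_euclideanSpace_fin] at h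
  exact ⟨C, hC, fun f g hf h2f hg h2g ↦ h f g (hf.continuous.memLp_of_hasCompactSupport h2f)
    (hg.of_le (by exact_mod_cast le_top)) h2g⟩

end
end

section
/- Let d ≥ 1 be an integer, T > 0, and let b : [0,T] × ℝ^d → ℝ^d be Borel measurable and locally bounded. Suppose there exists a countable set 𝒟 ⊆ C_c^∞(ℝ^d) that separates the points of ℝ^d (for all a ≠ a' in ℝ^d there is φ ∈ 𝒟 with φ(a) ≠ φ(a')), such that for every rational t_f ∈ [0,T], every φ ∈ 𝒟 and every R > 0 there exist sequences b_n ∈ C_c^∞([0,T] × ℝ^d; ℝ^d) and v_n ∈ C¹([0,T]; C_c^∞(ℝ^d)) satisfying ∂_s v_n + b_n·∇v_n = 0 on [0,t_f] × ℝ^d, v_n(t_f,·) = φ, and lim_{n→∞} ∫₀^{t_f} sup_{|x| ≤ R} | (b(s,x) − b_n(s,x))·∇v_n(s,x) | ds = 0. Then for every x ∈ ℝ^d, any two continuous functions y¹, y² : [0,T] → ℝ^d satisfying y^i(t) = x + ∫₀^t b(s, y^i(s)) ds for all t ∈ [0,T] (i = 1,2) coincide: y¹ = y². -/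
/-!
Let `u` solve the transport equation backwards from `u t = φ` with velocity `c`. Along a trajectory
`y` of `b` started at `x`, the function `s ↦ u s (y s)` is Lipschitz, with derivative
`((b - c) · ∇u) (s, y s)` almost everywhere. Hence `|φ (y t) - u 0 x|` is at most the integral over
`[0, t]` of `sup |(b - c) · ∇u|`. For an approximating sequence `u n` this forces
`u n 0 x → φ (y t)`, and the left-hand side does not depend on the trajectory: two trajectories
started at `x` are not distinguished by `φ` at time `t`. Letting `φ` run through a separating family
shows that they agree at a dense set of times, hence everywhere.
-/

open MeasureTheory Metric Set Filter
open scoped ENNReal NNReal Topology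

noncomputable section

/-- Test functions `φ ∈ C¹([0,T]; C_c^∞(ℝ^d))`: jointly `C¹` in `(t,x)`,
smooth in `x` for each `t`, with support contained in a fixed ball uniformly in `t`. -/
def IsTestFun (d : ℕ) (φ : ℝ → EuclideanSpace ℝ (Fin d) → ℝ) : Prop :=
  ContDiff ℝ 1 (fun p : ℝ × EuclideanSpace ℝ (Fin d) => φ p.1 p.2) ∧
  (∀ t : ℝ, ContDiff ℝ (⊤ : ℕ∞) (φ t)) ∧
  ∃ R : ℝ, 0 < R ∧ ∀ (t : ℝ) (x : EuclideanSpace ℝ (Fin d)), R ≤ ‖x‖ → φ t x = 0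

/-- Smooth compactly supported scalar function on `ℝ^d`. -/
def IsSmoothCS (d : ℕ) (φ : EuclideanSpace ℝ (Fin d) → ℝ) : Prop :=
  ContDiff ℝ (⊤ : ℕ∞) φ ∧ HasCompactSupport φ

/-- Element of `C_c^∞([0,T] × ℝ^d; ℝ^d)`. -/
def IsSmoothCSVec (d : ℕ) (ψ : ℝ → EuclideanSpace ℝ (Fin d) → EuclideanSpace ℝ (Fin d)) : Prop :=
  ContDiff ℝ (⊤ : ℕ∞) (fun p : ℝ × EuclideanSpace ℝ (Fin d) => ψ p.1 p.2) ∧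
  HasCompactSupport (fun p : ℝ × EuclideanSpace ℝ (Fin d) => ψ p.1 p.2)

section Calculus

lemma hasDerivAt_along_path {𝕜 E F : Type*} [NontriviallyNormedField 𝕜]
    [NormedAddCommGroup E] [NormedSpace 𝕜 E] [NormedAddCommGroup F] [NormedSpace 𝕜 F]
    {u : 𝕜 → E → F} {y : 𝕜 → E} {v : E} {s : 𝕜}
    (hu : DifferentiableAt 𝕜 (Function.uncurry u) (s, y s)) (hy : HasDerivAt y v s) :
    HasDerivAt (fun r => u r (y r)) (deriv (fun r => u r (y s)) s + fderiv 𝕜 (u s) (y s) v) s := by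
  have hu' := hu.hasFDerivAt
  have htime : deriv (fun r => u r (y s)) s = fderiv 𝕜 (Function.uncurry u) (s, y s) (1, 0) :=
    HasDerivAt.deriv <|
      hu'.comp_hasDerivAt_of_eq s ((hasDerivAt_id s).prodMk (hasDerivAt_const s (y s))) rfl
  have hspace : fderiv 𝕜 (u s) (y s) v = fderiv 𝕜 (Function.uncurry u) (s, y s) (0, v) :=
    congrArg (· v) (hu'.comp (y s) (hasFDerivAt_prodMk_right s (y s))).fderiv
  rw [htime, hspace, ← map_add, Prod.mk_add_mk, add_zero, zero_add]
  exact hu'.comp_hasDerivAt s ((hasDerivAt_id s).prodMk hy)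

variable {E : Type*} [NormedAddCommGroup E] [NormedSpace ℝ E]

lemma exists_lipschitzOnWith_along_path {F : Type*} [NormedAddCommGroup F] [NormedSpace ℝ F]
    {u : ℝ → E → F} (hu : ContDiff ℝ 1 (Function.uncurry u)) {y : ℝ → E}
    {I : Set ℝ} (hI : IsCompact I) {M : ℝ≥0} (hy : LipschitzOnWith M y I) :
    ∃ K, LipschitzOnWith K (fun s => u s (y s)) I := by
  have hgraph : LipschitzOnWith (max 1 M) (fun s => (s, y s)) I :=
    LipschitzWith.id.lipschitzOnWith.prodMk hy
  obtain ⟨K, hK⟩ := hu.locallyLipschitz.locallyLipschitzOn.exists_lipschitzOnWith_of_compact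
    (hI.image_of_continuousOn hgraph.continuousOn)
  exact ⟨K * max 1 M, hK.comp hgraph (mapsTo_image _ _)⟩

lemma integral_deriv_along_path_eq_sub {u : ℝ → E → ℝ}
    (hu : ContDiff ℝ 1 (Function.uncurry u)) {y v : ℝ → E} {a b : ℝ} {M : ℝ≥0}
    (hy : LipschitzOnWith M y (uIcc a b))
    (hyv : ∀ᵐ s, s ∈ uIcc a b → HasDerivAt y (v s) s) :
    ∫ s in a..b, (deriv (fun r => u r (y s)) s + fderiv ℝ (u s) (y s) (v s)) =
      u b (y b) - u a (y a) := by
  obtain ⟨K, hK⟩ := exists_lipschitzOnWith_along_path hu isCompact_uIcc hy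
  rw [← hK.absolutelyContinuousOnInterval.integral_deriv_eq_sub]
  refine intervalIntegral.integral_congr_ae ?_
  filter_upwards [hyv] with s hs hmem
  exact (hasDerivAt_along_path (hu.differentiable one_ne_zero _)
    (hs (uIoc_subset_uIcc hmem))).deriv.symm

lemma lipschitzOnWith_integral_of_norm_le {f : ℝ → E} {a b : ℝ} {M : ℝ≥0}
    (hf : IntervalIntegrable f volume a b) (hM : ∀ s ∈ uIcc a b, ‖f s‖ ≤ M) :
    LipschitzOnWith M (fun t => ∫ s in a..t, f s) (uIcc a b) := by
  have hint : ∀ t ∈ uIcc a b, IntervalIntegrable f volume a t := fun t ht =>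
    hf.mono_set (uIcc_subset_uIcc_left ht)
  refine LipschitzOnWith.of_dist_le_mul fun r hr t ht => ?_
  rw [dist_eq_norm, intervalIntegral.integral_interval_sub_left (hint r hr) (hint t ht),
    Real.dist_eq]
  exact intervalIntegral.norm_integral_le_of_norm_le_const fun s hs =>
    hM s (uIcc_subset_uIcc ht hr (uIoc_subset_uIcc hs))

end Calculus

lemma exists_mapsTo_closedBall {X E : Type*} [TopologicalSpace X] [SeminormedAddCommGroup E]
    {K : Set X} (hK : IsCompact K) {f g : X → E} (hf : ContinuousOn f K) (hg : ContinuousOn g K) :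
    ∃ R > 0, MapsTo f K (closedBall 0 R) ∧ MapsTo g K (closedBall 0 R) := by
  obtain ⟨R, hR, hsub⟩ := ((hK.image_of_continuousOn hf).union
    (hK.image_of_continuousOn hg)).isBounded.subset_closedBall_lt 0 0
  rw [union_subset_iff, image_subset_iff, image_subset_iff] at hsub
  exact ⟨R, hR, hsub⟩

section Trajectory

variable {E : Type*} [NormedAddCommGroup E]

/-- The field `b` is locally bounded on `[0, T] × E`: bounded on `[0, T] × K` for every compact
`K`. -/
def IsLocallyBoundedField (b : ℝ → E → E) (T : ℝ) : Prop :=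
  ∀ K : Set E, IsCompact K → ∃ M : ℝ, ∀ s ∈ Icc (0 : ℝ) T, ∀ x ∈ K, ‖b s x‖ ≤ M

variable [NormedSpace ℝ E]

/-- Trajectories on `[0, T]` of the field `b` started at `x`, in the sense of the integral
equation. -/
structure IsTrajectory (b : ℝ → E → E) (T : ℝ) (x : E) (y : ℝ → E) : Prop where
  continuousOn : ContinuousOn y (Icc 0 T)
  eq_add_integral : ∀ t ∈ Icc (0 : ℝ) T, y t = x + ∫ s in (0 : ℝ)..t, b s (y s)

namespace IsTrajectory

variable {b : ℝ → E → E} {T : ℝ} {x : E} {y : ℝ → E}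

lemma apply_zero (hy : IsTrajectory b T x y) (hT : 0 ≤ T) : y 0 = x := by
  simpa using hy.eq_add_integral 0 (left_mem_Icc.2 hT)

lemma exists_norm_velocity_le (hy : IsTrajectory b T x y) (hb : IsLocallyBoundedField b T) :
    ∃ M : ℝ≥0, ∀ s ∈ Icc (0 : ℝ) T, ‖b s (y s)‖ ≤ M := by
  obtain ⟨M, hM⟩ := hb _ (isCompact_Icc.image_of_continuousOn hy.continuousOn)
  exact ⟨M.toNNReal, fun s hs =>
    (hM s hs _ (mem_image_of_mem y hs)).trans (Real.le_coe_toNNReal M)⟩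

lemma intervalIntegrable_velocity [MeasurableSpace E] [BorelSpace E] [SecondCountableTopology E]
    (hy : IsTrajectory b T x y) (hT : 0 ≤ T) (hbmeas : Measurable (Function.uncurry b))
    (hb : IsLocallyBoundedField b T) :
    IntervalIntegrable (fun s => b s (y s)) volume 0 T := by
  obtain ⟨M, hM⟩ := hy.exists_norm_velocity_le hb
  rw [intervalIntegrable_iff_integrableOn_Icc_of_le hT]
  have hmeas : AEMeasurable (fun s => b s (y s)) (volume.restrict (Icc 0 T)) :=
    hbmeas.comp_aemeasurable
      (aemeasurable_id.prodMk (hy.continuousOn.aemeasurable measurableSet_Icc))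
  exact IntegrableOn.of_bound measure_Icc_lt_top hmeas.aestronglyMeasurable M
    (ae_restrict_of_forall_mem measurableSet_Icc hM)

lemma lipschitzOnWith (hy : IsTrajectory b T x y) (hT : 0 ≤ T)
    (hint : IntervalIntegrable (fun s => b s (y s)) volume 0 T) {M : ℝ≥0}
    (hM : ∀ s ∈ Icc (0 : ℝ) T, ‖b s (y s)‖ ≤ M) : LipschitzOnWith M y (Icc 0 T) := by
  rw [← uIcc_of_le hT] at hM
  have hlip := lipschitzOnWith_integral_of_norm_le hint hM
  rw [uIcc_of_le hT] at hlip
  intro r hr s hs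
  rw [hy.eq_add_integral r hr, hy.eq_add_integral s hs, edist_add_left]
  exact hlip hr hs

lemma ae_hasDerivAt [CompleteSpace E] (hy : IsTrajectory b T x y)
    (hint : IntervalIntegrable (fun s => b s (y s)) volume 0 T) :
    ∀ᵐ s, s ∈ Icc (0 : ℝ) T → HasDerivAt y (b s (y s)) s := by
  filter_upwards [hint.ae_hasDerivAt_integral, Measure.ae_ne volume 0, Measure.ae_ne volume T]
    with s hs hs0 hsT hmem
  have hnhds : Icc 0 T ∈ 𝓝 s := Icc_mem_nhds (hmem.1.lt_of_ne' hs0) (hmem.2.lt_of_ne hsT)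
  refine ((hs (Icc_subset_uIcc hmem) 0 left_mem_uIcc).const_add x).congr_of_eventuallyEq ?_
  filter_upwards [hnhds] with t ht using hy.eq_add_integral t ht

end IsTrajectory

end Trajectory

section Transport

variable {E : Type*} [NormedAddCommGroup E] [NormedSpace ℝ E]

/-- Classical solutions `u` on `[0, t] × E` of the transport equation `∂ₛu + c · ∇u = 0`.
The function `u` is required to be `C¹` on all of `ℝ × E`, so that time derivatives at the endpoints
`0` and `t` are two-sided. -/
structure IsTransportSolution (c : ℝ → E → E) (u : ℝ → E → ℝ) (t : ℝ) : Prop where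
  contDiff : ContDiff ℝ 1 (Function.uncurry u)
  transport_eq : ∀ s ∈ Icc (0 : ℝ) t, ∀ z, deriv (fun r => u r z) s + fderiv ℝ (u s) z (c s z) = 0

/-- The quantity `∫₀ᵗ sup_{|z| ≤ R} |(b - c) · ∇u| ds`, which measures how far a solution `u` of the
transport equation with velocity `c` is from solving the one with velocity `b`. -/
def transportDefect (b c : ℝ → E → E) (u : ℝ → E → ℝ) (t R : ℝ) : ℝ≥0∞ :=
  ∫⁻ s in Icc (0 : ℝ) t, ⨆ z ∈ closedBall (0 : E) R, ‖fderiv ℝ (u s) z (b s z - c s z)‖ₑ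

/-- The transport equation with velocity `b` and final value `φ` at time `t` can be approximated on
the ball of radius `R`: there are classical solutions with other velocities and the same final value
whose defect tends to `0`. -/
def HasTransportApproximation (b : ℝ → E → E) (φ : E → ℝ) (t R : ℝ) : Prop :=
  ∃ (c : ℕ → ℝ → E → E) (u : ℕ → ℝ → E → ℝ),
    (∀ n, IsTransportSolution (c n) (u n) t) ∧ (∀ n, u n t = φ) ∧
      Tendsto (fun n => transportDefect b (c n) (u n) t R) atTop (𝓝 0)

variable [CompleteSpace E] [MeasurableSpace E] [BorelSpace E] [SecondCountableTopology E]
  {b : ℝ → E → E} {T t R : ℝ} {x : E}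

lemma IsTransportSolution.integral_eq_sub {c : ℝ → E → E} {u : ℝ → E → ℝ}
    (hu : IsTransportSolution c u t) (hbmeas : Measurable (Function.uncurry b))
    (hb : IsLocallyBoundedField b T) {y : ℝ → E} (hy : IsTrajectory b T x y)
    (ht : t ∈ Icc (0 : ℝ) T) :
    ∫ s in (0 : ℝ)..t, fderiv ℝ (u s) (y s) (b s (y s) - c s (y s)) = u t (y t) - u 0 x := by
  have hT : 0 ≤ T := ht.1.trans ht.2
  have hsub : uIcc 0 t ⊆ Icc 0 T := uIcc_of_le ht.1 ▸ Icc_subset_Icc_right ht.2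
  have hint := hy.intervalIntegrable_velocity hT hbmeas hb
  obtain ⟨M, hM⟩ := hy.exists_norm_velocity_le hb
  have hFTC := integral_deriv_along_path_eq_sub hu.contDiff
    ((hy.lipschitzOnWith hT hint hM).mono hsub)
    ((hy.ae_hasDerivAt hint).mono fun s hs hmem => hs (hsub hmem))
  rw [hy.apply_zero hT] at hFTC
  rw [← hFTC]
  refine intervalIntegral.integral_congr fun s hs => ?_
  have hc := hu.transport_eq s (uIcc_of_le ht.1 ▸ hs) (y s)
  simp only [map_sub, eq_neg_of_add_eq_zero_left hc, neg_add_eq_sub]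

lemma IsTransportSolution.enorm_sub_le_transportDefect {c : ℝ → E → E} {u : ℝ → E → ℝ}
    (hu : IsTransportSolution c u t) (hbmeas : Measurable (Function.uncurry b))
    (hb : IsLocallyBoundedField b T) {y : ℝ → E} (hy : IsTrajectory b T x y)
    (hyR : MapsTo y (Icc 0 T) (closedBall 0 R)) (ht : t ∈ Icc (0 : ℝ) T) :
    ‖u t (y t) - u 0 x‖ₑ ≤ transportDefect b c u t R := by
  rw [← hu.integral_eq_sub hbmeas hb hy ht, intervalIntegral.integral_of_le ht.1,
    ← integral_Icc_eq_integral_Ioc]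
  calc ‖∫ s in Icc 0 t, fderiv ℝ (u s) (y s) (b s (y s) - c s (y s))‖ₑ
      ≤ ∫⁻ s in Icc 0 t, ‖fderiv ℝ (u s) (y s) (b s (y s) - c s (y s))‖ₑ :=
        enorm_integral_le_lintegral_enorm _
    _ ≤ transportDefect b c u t R := setLIntegral_mono' measurableSet_Icc fun s hs =>
        le_iSup₂_of_le (y s) (hyR (Icc_subset_Icc_right ht.2 hs)) le_rfl

lemma HasTransportApproximation.apply_eq {φ : E → ℝ} (hφ : HasTransportApproximation b φ t R)
    (hbmeas : Measurable (Function.uncurry b)) (hb : IsLocallyBoundedField b T) {y₁ y₂ : ℝ → E}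
    (hy₁ : IsTrajectory b T x y₁) (hy₂ : IsTrajectory b T x y₂)
    (hy₁R : MapsTo y₁ (Icc 0 T) (closedBall 0 R)) (hy₂R : MapsTo y₂ (Icc 0 T) (closedBall 0 R))
    (ht : t ∈ Icc (0 : ℝ) T) : φ (y₁ t) = φ (y₂ t) := by
  obtain ⟨c, u, hu, hfinal, hdefect⟩ := hφ
  have hlim : ∀ y, IsTrajectory b T x y → MapsTo y (Icc 0 T) (closedBall 0 R) →
      Tendsto (fun n => u n 0 x) atTop (𝓝 (φ (y t))) := by
    intro y hy hyR
    rw [tendsto_iff_edist_tendsto_0]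
    refine tendsto_of_tendsto_of_tendsto_of_le_of_le tendsto_const_nhds hdefect
      (fun _ => zero_le) fun n => ?_
    rw [edist_comm, edist_eq_enorm_sub, ← hfinal n]
    exact (hu n).enorm_sub_le_transportDefect hbmeas hb hy hyR ht
  exact tendsto_nhds_unique (hlim y₁ hy₁ hy₁R) (hlim y₂ hy₂ hy₂R)

theorem path_by_path_uniqueness_of_trajectories_general
    (hbmeas : Measurable (Function.uncurry b)) (hb : IsLocallyBoundedField b T)
    {𝒟 : Set (E → ℝ)} (hsep : ∀ a a' : E, a ≠ a' → ∃ φ ∈ 𝒟, φ a ≠ φ a')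
    {S : Set ℝ} (hST : S ⊆ Icc 0 T) (hS : Icc 0 T ⊆ closure S)
    (happrox : ∀ t ∈ S, ∀ φ ∈ 𝒟, ∀ R : ℝ, 0 < R → HasTransportApproximation b φ t R)
    {y₁ y₂ : ℝ → E} (hy₁ : IsTrajectory b T x y₁) (hy₂ : IsTrajectory b T x y₂) :
    EqOn y₁ y₂ (Icc 0 T) := by
  obtain ⟨R, hR, hy₁R, hy₂R⟩ :=
    exists_mapsTo_closedBall isCompact_Icc hy₁.continuousOn hy₂.continuousOn
  have heq : EqOn y₁ y₂ S := by
    intro t ht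
    by_contra hne
    obtain ⟨φ, hφ, hφne⟩ := hsep _ _ hne
    exact hφne ((happrox t ht φ hφ R hR).apply_eq hbmeas hb hy₁ hy₂ hy₁R hy₂R (hST ht))
  exact heq.of_subset_closure hy₁.continuousOn hy₂.continuousOn hST hS

end Transport

theorem path_by_path_uniqueness_of_trajectories
    (d : ℕ) (hd : 1 ≤ d) (T : ℝ) (hT : 0 < T)
    (b : ℝ → EuclideanSpace ℝ (Fin d) → EuclideanSpace ℝ (Fin d))
    (hbmeas : Measurable (Function.uncurry b))
    (hbloc : ∀ K : Set (EuclideanSpace ℝ (Fin d)), IsCompact K →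
      ∃ M : ℝ, ∀ s ∈ Icc (0 : ℝ) T, ∀ x ∈ K, ‖b s x‖ ≤ M)
    (𝒟 : Set (EuclideanSpace ℝ (Fin d) → ℝ)) (h𝒟count : 𝒟.Countable)
    (h𝒟smooth : ∀ φ ∈ 𝒟, IsSmoothCS d φ)
    (h𝒟sep : ∀ a a' : EuclideanSpace ℝ (Fin d), a ≠ a' → ∃ φ ∈ 𝒟, φ a ≠ φ a')
    (happrox : ∀ tf : ℚ, (tf : ℝ) ∈ Icc (0 : ℝ) T → ∀ φ ∈ 𝒟, ∀ R : ℝ, 0 < R →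
      ∃ (bn : ℕ → ℝ → EuclideanSpace ℝ (Fin d) → EuclideanSpace ℝ (Fin d))
        (vn : ℕ → ℝ → EuclideanSpace ℝ (Fin d) → ℝ),
        (∀ n, IsSmoothCSVec d (bn n)) ∧
        (∀ n, IsTestFun d (vn n)) ∧
        (∀ n, ∀ s ∈ Icc (0 : ℝ) (tf : ℝ), ∀ x,
          deriv (fun τ => vn n τ x) s + fderiv ℝ (vn n s) x (bn n s x) = 0) ∧
        (∀ n, ∀ x, vn n (tf : ℝ) x = φ x) ∧
        Tendsto (fun n =>
            ∫⁻ s in Icc (0 : ℝ) (tf : ℝ),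
              ⨆ x ∈ closedBall (0 : EuclideanSpace ℝ (Fin d)) R,
                (‖fderiv ℝ (vn n s) x (b s x - bn n s x)‖₊ : ℝ≥0∞))
          atTop (𝓝 0)) :
    ∀ (x : EuclideanSpace ℝ (Fin d)) (y₁ y₂ : ℝ → EuclideanSpace ℝ (Fin d)),
      ContinuousOn y₁ (Icc 0 T) → ContinuousOn y₂ (Icc 0 T) →
      (∀ t ∈ Icc (0 : ℝ) T, y₁ t = x + ∫ s in (0 : ℝ)..t, b s (y₁ s)) →
      (∀ t ∈ Icc (0 : ℝ) T, y₂ t = x + ∫ s in (0 : ℝ)..t, b s (y₂ s)) →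
      EqOn y₁ y₂ (Icc 0 T) := by
  intro x y₁ y₂ hc₁ hc₂ h₁ h₂
  have hdense : Icc 0 T ⊆ closure (Icc 0 T ∩ range ((↑) : ℚ → ℝ)) :=
    closure_ordConnected_inter_rat ordConnected_Icc
      ⟨0, left_mem_Icc.2 hT.le, T, right_mem_Icc.2 hT.le, hT.ne⟩ ▸ subset_closure
  refine path_by_path_uniqueness_of_trajectories_general hbmeas hbloc h𝒟sep inter_subset_left
    hdense ?_ ⟨hc₁, h₁⟩ ⟨hc₂, h₂⟩
  rintro _ ⟨hq, q, rfl⟩ φ hφ R hR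
  obtain ⟨bn, vn, -, hvn, heq, hfinal, hlim⟩ := happrox q hq φ hφ R hR
  exact ⟨bn, vn, fun n => ⟨(hvn n).1, heq n⟩, fun n => funext (hfinal n), hlim⟩

end
end

section
/- Let d ≥ 1 be an integer, T > 0, m ≥ 1, and let f : [0,T] × ℝ^d → ℝ^d be Borel measurable. Say that a family μ = (μ_t)_{t∈[0,T]} of finite positive Borel measures on ℝ^d is a solution of the continuity equation in the class 𝓛_f if: each μ_t is absolutely continuous with respect to Lebesgue measure with density u(t,·); the function u belongs to L¹([0,T] × ℝ^d) ∩ L^m([0,T] × ℝ^d); ∫₀^T ∫_{ℝ^d} |f(t,x)| (1+|x|)^{−1} dμ_t(x) dt < ∞; and for every φ ∈ C_c^∞(ℝ^d), the map t ↦ ∫ φ dμ_t is continuous and satisfies ∫ φ dμ_t = ∫ φ dμ₀ + ∫₀^t ∫_{ℝ^d} f(s,x)·∇φ(x) dμ_s(x) ds for all t ∈ [0,T]. Say that a measurable map Φ : [0,T] × ℝ^d → ℝ^d is an 𝓛_f Lagrangian flow from a Borel set S ⊆ ℝ^d if: for Lebesgue-a.e. x ∈ S, the map t ↦ Φ_t(x)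 is continuous, s ↦ f(s, Φ_s(x)) is integrable on [0,T], and Φ_t(x) = x + ∫₀^t f(s, Φ_s(x)) ds for all t ∈ [0,T]; and the family (Φ_t)_#(1_S · 𝓛^d), t ∈ [0,T], is a solution of the continuity equation in the class 𝓛_f. Theorem: suppose that for every Borel set S ⊆ ℝ^d with 0 < 𝓛^d(S) < ∞, any two solutions of the continuity equation in the class 𝓛_f with the same initial datum μ₀ = 1_S · 𝓛^d coincide (μ¹_t = μ²_t for all t). Then for every Borel set S with 0 < 𝓛^d(S) < ∞, any two 𝓛_f Lagrangian flows Φ¹, Φ² from S satisfy: for every t ∈ [0,T], Φ¹_t(x) = Φ²_t(x) for Lebesgue-a.e. x ∈ S. -/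
open MeasureTheory Metric Set
open scoped ENNReal NNReal

noncomputable section

/-- `μ = (μ_t)` is a solution of the continuity equation `∂_t μ + div(f μ) = 0`
in the class `𝓛_f`: each `μ_t` (for `t ∈ [0,T]`) is a finite positive measure,
absolutely continuous with density `u(t,·)`, with `u ∈ L¹ ∩ L^m([0,T] × ℝ^d)`,
the drift satisfies `∫₀^T ∫ |f| (1+|x|)⁻¹ dμ_t dt < ∞`, and the weak
formulation holds with weak continuity in time. -/
def IsCESolInClass (d : ℕ) (T m : ℝ)
    (f : ℝ → EuclideanSpace ℝ (Fin d) → EuclideanSpace ℝ (Fin d))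
    (μ : ℝ → Measure (EuclideanSpace ℝ (Fin d))) : Prop :=
  (∀ t ∈ Icc (0 : ℝ) T, μ t univ < ⊤) ∧
  (∃ u : ℝ → EuclideanSpace ℝ (Fin d) → ℝ≥0∞,
    Measurable (Function.uncurry u) ∧
    (∀ t ∈ Icc (0 : ℝ) T,
      μ t = (volume : Measure (EuclideanSpace ℝ (Fin d))).withDensity (u t)) ∧
    (∫⁻ t in Icc (0 : ℝ) T, ∫⁻ x, u t x) < ⊤ ∧
    (∫⁻ t in Icc (0 : ℝ) T, ∫⁻ x, u t x ^ m) < ⊤) ∧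
  (∫⁻ t in Icc (0 : ℝ) T,
      ∫⁻ x, (‖f t x‖₊ : ℝ≥0∞) * ENNReal.ofReal ((1 + ‖x‖)⁻¹) ∂(μ t)) < ⊤ ∧
  (∀ φ : EuclideanSpace ℝ (Fin d) → ℝ, IsSmoothCS d φ →
    ContinuousOn (fun t => ∫ x, φ x ∂(μ t)) (Icc 0 T) ∧
    ∀ t ∈ Icc (0 : ℝ) T,
      (∫ x, φ x ∂(μ t)) = (∫ x, φ x ∂(μ 0)) +
        ∫ s in (0 : ℝ)..t, ∫ x, fderiv ℝ φ x (f s x) ∂(μ s))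

/-- `Φ` is an `𝓛_f` (local) Lagrangian flow starting from the Borel set `S`
and solving the ODE `Φ' = f(t,Φ)`. -/
def IsLagrangianFlow (d : ℕ) (T m : ℝ)
    (f : ℝ → EuclideanSpace ℝ (Fin d) → EuclideanSpace ℝ (Fin d))
    (S : Set (EuclideanSpace ℝ (Fin d)))
    (Φ : ℝ → EuclideanSpace ℝ (Fin d) → EuclideanSpace ℝ (Fin d)) : Prop :=
  Measurable (Function.uncurry Φ) ∧
  (∀ᵐ x ∂((volume : Measure (EuclideanSpace ℝ (Fin d))).restrict S),
    ContinuousOn (fun t => Φ t x) (Icc 0 T) ∧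
    IntegrableOn (fun s => f s (Φ s x)) (Icc 0 T) ∧
    ∀ t ∈ Icc (0 : ℝ) T, Φ t x = x + ∫ s in (0 : ℝ)..t, f s (Φ s x)) ∧
  IsCESolInClass d T m f
    (fun t => Measure.map (Φ t)
      ((volume : Measure (EuclideanSpace ℝ (Fin d))).restrict S))

/-!
Transporting a measure `ρ ≤ 1_S 𝓛^d` along a Lagrangian flow from `S` gives a solution of the
continuity equation in the class `𝓛_f`: its density is dominated by that of the flow, and the weak
formulation is the chain rule along trajectories integrated against `ρ`. Applying the uniqueness
hypothesis to `ρ = 1_A 𝓛^d` for every Borel `A ⊆ S` shows that `Φ¹_t` and `Φ²_t` push forward all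
these restrictions to the same measures. If the two maps disagreed on a set of positive measure,
then for some Borel `B` the set `A` of points sent into `B` by one map only would have positive
measure, while the images of `1_A 𝓛^d` give different masses to `B`.
-/

section ChainRule

variable {E X Y : Type*} [NormedAddCommGroup E] [NormedSpace ℝ E] [PseudoMetricSpace X]
  [PseudoMetricSpace Y] {a b : ℝ}

theorem absolutelyContinuousOnInterval_of_dist_le {g : ℝ → X} {h : ℝ → Y} {K : ℝ}
    (hh : AbsolutelyContinuousOnInterval h a b)
    (hgh : ∀ s ∈ uIcc a b, ∀ t ∈ uIcc a b, dist (g s) (g t) ≤ K * dist (h s) (h t)) :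
    AbsolutelyContinuousOnInterval g a b := by
  have hlim := Filter.Tendsto.const_mul K hh
  rw [mul_zero] at hlim
  refine squeeze_zero'
    (Filter.Eventually.of_forall fun I => Finset.sum_nonneg fun _ _ => dist_nonneg) ?_ hlim
  filter_upwards [Filter.mem_inf_of_right (Filter.mem_principal_self _)] with I hI
  rw [Finset.mul_sum]
  exact Finset.sum_le_sum fun i hi => hgh _ (hI.1 i hi).1 _ (hI.1 i hi).2

theorem absolutelyContinuousOnInterval_lipschitzWith_comp_primitive {φ : E → X} {K : ℝ≥0}
    (hφ : LipschitzWith K φ) {h : ℝ → E} (hh : IntervalIntegrable h volume a b) (x : E) :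
    AbsolutelyContinuousOnInterval (fun t => φ (x + ∫ r in a..t, h r)) a b := by
  have hint : ∀ r ∈ uIcc a b, IntervalIntegrable h volume a r := fun r hr =>
    hh.mono_set (uIcc_subset_uIcc_left hr)
  -- Compare with the primitive of `‖h‖`, whose increments dominate.
  refine absolutelyContinuousOnInterval_of_dist_le (K := K)
    (hh.norm.absolutelyContinuousOnInterval_intervalIntegral left_mem_uIcc) fun s hs t ht => ?_
  refine (hφ.dist_le_mul _ _).trans ?_
  gcongr
  rw [dist_add_left, dist_eq_norm, Real.dist_eq,
    intervalIntegral.integral_interval_sub_left (hint s hs) (hint t ht),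
    intervalIntegral.integral_interval_sub_left (hint s hs).norm (hint t ht).norm]
  exact intervalIntegral.norm_integral_le_abs_integral_norm

theorem integral_fderiv_comp_primitive [CompleteSpace E] {φ : E → ℝ} (hφ : Differentiable ℝ φ)
    {K : ℝ≥0} (hK : LipschitzWith K φ) {h : ℝ → E} (hh : IntervalIntegrable h volume a b) (x : E) :
    ∫ s in a..b, fderiv ℝ φ (x + ∫ r in a..s, h r) (h s) = φ (x + ∫ r in a..b, h r) - φ x := by
  have hderiv : ∀ᵐ s, s ∈ uIoc a b → fderiv ℝ φ (x + ∫ r in a..s, h r) (h s) =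
      deriv (fun t => φ (x + ∫ r in a..t, h r)) s := by
    filter_upwards [hh.ae_hasDerivAt_integral] with s hs hmem
    have hprim := (hs (uIoc_subset_uIcc hmem) a left_mem_uIcc).const_add x
    exact ((hφ _).hasFDerivAt.comp_hasDerivAt s hprim).deriv.symm
  rw [intervalIntegral.integral_congr_ae hderiv,
    (absolutelyContinuousOnInterval_lipschitzWith_comp_primitive hK hh x).integral_deriv_eq_sub,
    intervalIntegral.integral_same, add_zero]

end ChainRule

section Density

open ProbabilityTheory

variable {α β γ : Type*} [MeasurableSpace α] [MeasurableSpace β] [MeasurableSpace γ]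

theorem exists_measurable_density_le_of_kernel_le [MeasurableSpace.CountablyGenerated γ]
    {κ η : Kernel α γ} [IsFiniteKernel η] (hκη : κ ≤ η) (ν : Measure γ) {u : α → γ → ℝ≥0∞}
    (hu : Measurable (Function.uncurry u)) :
    ∃ v : α → γ → ℝ≥0∞, Measurable (Function.uncurry v) ∧ (∀ a x, v a x ≤ u a x) ∧
      ∀ a, η a = ν.withDensity (u a) → κ a = ν.withDensity (v a) := by
  have : IsFiniteKernel κ := isFiniteKernel_of_le hκη
  have hr := Kernel.measurable_rnDeriv κ η
  -- Truncating at `1` leaves the Radon-Nikodym derivative unchanged `η a`-a.e. and yields `v ≤ u`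
  -- everywhere.
  refine ⟨fun a x => u a x * min (κ.rnDeriv η a x) 1, hu.mul (hr.min measurable_const),
    fun a x => mul_le_of_le_one_right' (min_le_right _ _), fun a ha => ?_⟩
  have hra : Measurable fun x => min (κ.rnDeriv η a x) 1 :=
    (Kernel.measurable_rnDeriv_right κ η a).min measurable_const
  calc κ a = η.withDensity (κ.rnDeriv η) a :=
        (Kernel.withDensity_rnDeriv_eq (hκη a).absolutelyContinuous).symm
    _ = (η a).withDensity (κ.rnDeriv η a) := Kernel.withDensity_apply η hr a
    _ = (η a).withDensity fun x => min (κ.rnDeriv η a x) 1 := by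
        refine withDensity_congr_ae ?_
        filter_upwards [Kernel.rnDeriv_eq_rnDeriv_measure (κ := κ) (η := η) (a := a),
          Measure.rnDeriv_le_one_of_le (hκη a)] with x hx hx1
        exact (min_eq_left (hx.trans_le hx1)).symm
    _ = ν.withDensity fun x => u a x * min (κ.rnDeriv η a x) 1 := by
        rw [ha, ← withDensity_mul _ hu.of_uncurry_left hra]
        rfl

/-- The family of image measures `t ↦ (Φ_t)_# ρ` as a kernel. It is encoded as the image of
`δ_t ⊗ ρ` under the uncurried map, and has this meaning only when that map is measurable. -/
def pushforwardKernel (Φ : α → β → γ) (ρ : Measure β) : Kernel α γ :=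
  (Kernel.id ×ₖ Kernel.const α ρ).map (Function.uncurry Φ)

instance isFiniteKernel_pushforwardKernel (Φ : α → β → γ) (ρ : Measure β) [IsFiniteMeasure ρ] :
    IsFiniteKernel (pushforwardKernel Φ ρ) := by
  unfold pushforwardKernel
  infer_instance

theorem pushforwardKernel_apply {Φ : α → β → γ} (hΦ : Measurable (Function.uncurry Φ))
    (ρ : Measure β) [SFinite ρ] (t : α) : pushforwardKernel Φ ρ t = ρ.map (Φ t) := by
  rw [pushforwardKernel, Kernel.map_apply _ hΦ, Kernel.prod_apply, Kernel.id_apply,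
    Kernel.const_apply, Measure.dirac_prod, Measure.map_map hΦ measurable_prodMk_left]
  rfl

theorem exists_measurable_density_map_le [MeasurableSpace.CountablyGenerated γ] {Φ : α → β → γ}
    (hΦ : Measurable (Function.uncurry Φ)) {ρ σ : Measure β} [IsFiniteMeasure σ] (hρσ : ρ ≤ σ)
    (ν : Measure γ) {u : α → γ → ℝ≥0∞} (hu : Measurable (Function.uncurry u)) :
    ∃ v : α → γ → ℝ≥0∞, Measurable (Function.uncurry v) ∧ (∀ t x, v t x ≤ u t x) ∧
      ∀ t, σ.map (Φ t) = ν.withDensity (u t) → ρ.map (Φ t) = ν.withDensity (v t) := by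
  have : IsFiniteMeasure ρ := isFiniteMeasure_of_le σ hρσ
  have hle : pushforwardKernel Φ ρ ≤ pushforwardKernel Φ σ := fun t => by
    simpa only [pushforwardKernel_apply hΦ] using Measure.map_mono hρσ hΦ.of_uncurry_left
  simpa only [pushforwardKernel_apply hΦ] using exists_measurable_density_le_of_kernel_le hle ν hu

end Density

theorem exists_enorm_fderiv_apply_le_of_hasCompactSupport {E F : Type*} [NormedAddCommGroup E]
    [NormedSpace ℝ E] [NormedAddCommGroup F] [NormedSpace ℝ F] {φ : E → F} (hφ : ContDiff ℝ 1 φ)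
    (hsupp : HasCompactSupport φ) :
    ∃ C : ℝ≥0, ∀ x v : E,
      ‖fderiv ℝ φ x v‖ₑ ≤ C * (‖v‖ₑ * ENNReal.ofReal (1 + ‖x‖)⁻¹) := by
  have hcont : Continuous fun x => (1 + ‖x‖) • fderiv ℝ φ x :=
    (continuous_const.add continuous_norm).smul (hφ.continuous_fderiv one_ne_zero)
  obtain ⟨C, hC⟩ :=
    ((hsupp.fderiv ℝ).smul_left (f := fun x => 1 + ‖x‖)).exists_bound_of_continuous hcont
  refine ⟨C.toNNReal, fun x v => ?_⟩
  have hx : 0 < 1 + ‖x‖ := by positivity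
  have hop : ‖fderiv ℝ φ x‖ ≤ C * (1 + ‖x‖)⁻¹ := by
    rw [← div_eq_mul_inv, le_div_iff₀' hx]
    simpa only [Pi.smul_apply', norm_smul, Real.norm_of_nonneg hx.le] using hC x
  have happly : ‖fderiv ℝ φ x v‖ ≤ C * (‖v‖ * (1 + ‖x‖)⁻¹) :=
    calc ‖fderiv ℝ φ x v‖ ≤ C * (1 + ‖x‖)⁻¹ * ‖v‖ := (fderiv ℝ φ x).le_of_opNorm_le hop v
      _ = C * (‖v‖ * (1 + ‖x‖)⁻¹) := by ring
  calc ‖fderiv ℝ φ x v‖ₑ = ENNReal.ofReal ‖fderiv ℝ φ x v‖ := (ofReal_norm _).symm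
    _ ≤ ENNReal.ofReal (C * (‖v‖ * (1 + ‖x‖)⁻¹)) := ENNReal.ofReal_le_ofReal happly
    _ = C.toNNReal * (‖v‖ₑ * ENNReal.ofReal (1 + ‖x‖)⁻¹) := by
      rw [ENNReal.ofReal_mul' (by positivity), ENNReal.ofReal_mul (norm_nonneg v), ofReal_norm]
      rfl

namespace IsLagrangianFlow

variable {d : ℕ} {T m : ℝ} {f : ℝ → EuclideanSpace ℝ (Fin d) → EuclideanSpace ℝ (Fin d)}
  {S : Set (EuclideanSpace ℝ (Fin d))}
  {Φ : ℝ → EuclideanSpace ℝ (Fin d) → EuclideanSpace ℝ (Fin d)}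
  {ρ : Measure (EuclideanSpace ℝ (Fin d))} {φ : EuclideanSpace ℝ (Fin d) → ℝ} {t : ℝ}

theorem measurable_apply (hΦ : IsLagrangianFlow d T m f S Φ) (t : ℝ) : Measurable (Φ t) :=
  hΦ.1.of_uncurry_left

theorem volume_lt_top (hΦ : IsLagrangianFlow d T m f S Φ) (hT : 0 ≤ T) : volume S < ⊤ := by
  have hmass := hΦ.2.2.1 0 (left_mem_Icc.2 hT)
  rwa [Measure.map_apply (hΦ.measurable_apply 0) MeasurableSet.univ, preimage_univ,
    Measure.restrict_apply_univ] at hmass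

theorem map_zero (hΦ : IsLagrangianFlow d T m f S Φ) (hT : 0 ≤ T) (hρ : ρ ≪ volume.restrict S) :
    ρ.map (Φ 0) = ρ := by
  have hid : Φ 0 =ᵐ[ρ] id := by
    filter_upwards [hρ.ae_le hΦ.2.1] with x ⟨_, _, hode⟩
    simpa only [intervalIntegral.integral_same, add_zero, id_eq] using hode 0 (left_mem_Icc.2 hT)
  rw [Measure.map_congr hid, Measure.map_id]

theorem continuousOn_integral_map (hΦ : IsLagrangianFlow d T m f S Φ) [IsFiniteMeasure ρ]
    (hρ : ρ ≪ volume.restrict S) (hφ : Continuous φ) {C : ℝ} (hC : ∀ x, ‖φ x‖ ≤ C) :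
    ContinuousOn (fun t => ∫ x, φ x ∂ρ.map (Φ t)) (Icc 0 T) := by
  simp only [integral_map (hΦ.measurable_apply _).aemeasurable hφ.aestronglyMeasurable]
  refine continuousOn_of_dominated (bound := fun _ => C)
    (fun t _ => (hφ.measurable.comp (hΦ.measurable_apply t)).aestronglyMeasurable)
    (fun t _ => Filter.Eventually.of_forall fun x => hC _) (integrable_const C) ?_
  filter_upwards [hρ.ae_le hΦ.2.1] with x ⟨htraj, _⟩
  exact hφ.comp_continuousOn htraj

theorem ae_comp_eq_add_integral (hΦ : IsLagrangianFlow d T m f S Φ) (hφ : Differentiable ℝ φ)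
    {K : ℝ≥0} (hK : LipschitzWith K φ) :
    ∀ᵐ x ∂(volume : Measure (EuclideanSpace ℝ (Fin d))).restrict S, ∀ t ∈ Icc (0 : ℝ) T,
      φ (Φ t x) = φ x + ∫ s in (0 : ℝ)..t, fderiv ℝ φ (Φ s x) (f s (Φ s x)) := by
  filter_upwards [hΦ.2.1] with x ⟨_, hint, hode⟩ t ht
  have hsub : uIcc 0 t ⊆ Icc 0 T := by
    rw [uIcc_of_le ht.1]
    exact Icc_subset_Icc_right ht.2
  have hchain := integral_fderiv_comp_primitive hφ hK (hint.mono_set hsub).intervalIntegrable x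
  rw [← hode t ht] at hchain
  rw [eq_comm, ← eq_sub_iff_add_eq', ← hchain]
  refine intervalIntegral.integral_congr fun s hs => ?_
  simp only [← hode s (hsub hs)]

theorem integrable_fderiv_comp (hΦ : IsLagrangianFlow d T m f S Φ)
    (hf : Measurable (Function.uncurry f)) (hφ : ContDiff ℝ 1 φ) (hsupp : HasCompactSupport φ) :
    Integrable (Function.uncurry fun s x => fderiv ℝ φ (Φ s x) (f s (Φ s x)))
      ((volume.restrict (Icc 0 T)).prod (volume.restrict S)) := by
  obtain ⟨C, hC⟩ := exists_enorm_fderiv_apply_le_of_hasCompactSupport hφ hsupp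
  have hmeas : Measurable (Function.uncurry fun s x => fderiv ℝ φ (Φ s x) (f s (Φ s x))) :=
    (hφ.continuous_fderiv_apply one_ne_zero).measurable.comp
      (hΦ.1.prodMk (hf.comp (measurable_fst.prodMk hΦ.1)))
  have hslice (s : ℝ) : ∫⁻ x in S, ‖fderiv ℝ φ (Φ s x) (f s (Φ s x))‖ₑ ≤
      C * ∫⁻ y, ‖f s y‖ₑ * ENNReal.ofReal (1 + ‖y‖)⁻¹ ∂(volume.restrict S).map (Φ s) := by
    have hfs : Measurable (f s) := hf.of_uncurry_left
    rw [lintegral_map (by fun_prop) (hΦ.measurable_apply s),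
      ← lintegral_const_mul' _ _ ENNReal.coe_ne_top]
    exact lintegral_mono fun x => hC _ _
  refine ⟨hmeas.aestronglyMeasurable, ?_⟩
  rw [hasFiniteIntegral_iff_enorm, lintegral_prod _ hmeas.enorm.aemeasurable]
  refine (lintegral_mono hslice).trans_lt ?_
  rw [lintegral_const_mul' _ _ ENNReal.coe_ne_top]
  exact ENNReal.mul_lt_top ENNReal.coe_lt_top hΦ.2.2.2.2.1

theorem integral_map_eq_add_integral (hΦ : IsLagrangianFlow d T m f S Φ)
    (hf : Measurable (Function.uncurry f)) [SFinite ρ] (hρ : ρ ≤ volume.restrict S)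
    (hφ : ContDiff ℝ 1 φ) (hsupp : HasCompactSupport φ) (ht : t ∈ Icc 0 T) :
    ∫ x, φ x ∂ρ.map (Φ t) =
      ∫ x, φ x ∂ρ + ∫ s in (0 : ℝ)..t, ∫ x, fderiv ℝ φ x (f s x) ∂ρ.map (Φ s) := by
  obtain ⟨K, hK⟩ := hφ.lipschitzWith_of_hasCompactSupport hsupp one_ne_zero
  have hchain := ae_mono hρ (hΦ.ae_comp_eq_add_integral (hφ.differentiable one_ne_zero) hK)
  have hintφ : Integrable φ ρ := (hφ.continuous.integrable_of_hasCompactSupport hsupp).mono_measure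
    (hρ.trans Measure.restrict_le_self)
  have hIoc : Ioc 0 t ⊆ Icc 0 T := Ioc_subset_Icc_self.trans (Icc_subset_Icc_right ht.2)
  have hint := (hΦ.integrable_fderiv_comp hf hφ hsupp).mono_measure
    (Measure.prod_mono (Measure.restrict_mono_set volume hIoc) hρ)
  have hdf (s : ℝ) : Measurable fun x => fderiv ℝ φ x (f s x) :=
    (hφ.continuous_fderiv_apply one_ne_zero).measurable.comp
      (measurable_id.prodMk hf.of_uncurry_left)
  have hpush (s : ℝ) : ∫ x, fderiv ℝ φ x (f s x) ∂ρ.map (Φ s) =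
      ∫ x, fderiv ℝ φ (Φ s x) (f s (Φ s x)) ∂ρ :=
    integral_map (hΦ.measurable_apply s).aemeasurable (hdf s).aestronglyMeasurable
  calc ∫ x, φ x ∂ρ.map (Φ t) = ∫ x, φ (Φ t x) ∂ρ :=
        integral_map (hΦ.measurable_apply t).aemeasurable hφ.continuous.aestronglyMeasurable
    _ = ∫ x, (φ x + ∫ s in Ioc 0 t, fderiv ℝ φ (Φ s x) (f s (Φ s x))) ∂ρ := by
        refine integral_congr_ae ?_
        filter_upwards [hchain] with x hx
        rw [hx t ht, intervalIntegral.integral_of_le ht.1]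
    _ = ∫ x, φ x ∂ρ + ∫ x, (∫ s in Ioc 0 t, fderiv ℝ φ (Φ s x) (f s (Φ s x))) ∂ρ :=
        integral_add hintφ hint.integral_prod_right
    _ = ∫ x, φ x ∂ρ + ∫ s in (0 : ℝ)..t, ∫ x, fderiv ℝ φ x (f s x) ∂ρ.map (Φ s) := by
        simp only [hpush, intervalIntegral.integral_of_le ht.1, integral_integral_swap hint]

theorem isCESolInClass_map (hΦ : IsLagrangianFlow d T m f S Φ) (hT : 0 ≤ T) (hm : 0 ≤ m)
    (hf : Measurable (Function.uncurry f)) (hρ : ρ ≤ volume.restrict S) :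
    IsCESolInClass d T m f fun t => ρ.map (Φ t) := by
  have : IsFiniteMeasure ((volume : Measure (EuclideanSpace ℝ (Fin d))).restrict S) :=
    isFiniteMeasure_restrict.2 (hΦ.volume_lt_top hT).ne
  have : IsFiniteMeasure ρ := isFiniteMeasure_of_le _ hρ
  obtain ⟨-, ⟨u, hu, hdens, hL1, hLm⟩, hdrift, -⟩ := hΦ.2.2
  refine ⟨fun t _ => measure_lt_top _ _, ?_, ?_, fun φ ⟨hφ, hsupp⟩ => ⟨?_, fun t ht => ?_⟩⟩
  · obtain ⟨v, hv, hvu, hvdens⟩ := exists_measurable_density_map_le hΦ.1 hρ volume hu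
    refine ⟨v, hv, fun t ht => hvdens t (hdens t ht), ?_, ?_⟩
    · exact (lintegral_mono fun t => lintegral_mono (hvu t)).trans_lt hL1
    · exact (lintegral_mono fun t => lintegral_mono fun x =>
        ENNReal.rpow_le_rpow (hvu t x) hm).trans_lt hLm
  · have hle (t : ℝ) : ρ.map (Φ t) ≤ (volume.restrict S).map (Φ t) :=
      Measure.map_mono hρ (hΦ.measurable_apply t)
    exact (lintegral_mono fun t => lintegral_mono' (hle t) le_rfl).trans_lt hdrift
  · obtain ⟨C, hC⟩ := hsupp.exists_bound_of_continuous hφ.continuous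
    exact hΦ.continuousOn_integral_map hρ.absolutelyContinuous hφ.continuous hC
  · beta_reduce
    rw [hΦ.map_zero hT hρ.absolutelyContinuous]
    exact hΦ.integral_map_eq_add_integral hf hρ (hφ.of_le (by simp)) hsupp ht

end IsLagrangianFlow

section SeparatingMaps

variable {α β : Type*} [MeasurableSpace α] [MeasurableSpace β] {ρ : Measure α} {g h : α → β}

theorem ae_mem_imp_mem_of_map_restrict_eq (hg : Measurable g) (hh : Measurable h) {B : Set β}
    (hB : MeasurableSet B)
    (heq : (ρ.restrict (g ⁻¹' B \ h ⁻¹' B)).map g = (ρ.restrict (g ⁻¹' B \ h ⁻¹' B)).map h) :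
    ∀ᵐ x ∂ρ, g x ∈ B → h x ∈ B := by
  have hnull : ρ (g ⁻¹' B \ h ⁻¹' B) = 0 :=
    calc ρ (g ⁻¹' B \ h ⁻¹' B) = (ρ.restrict (g ⁻¹' B \ h ⁻¹' B)).map g B := by
          rw [Measure.map_apply hg hB, Measure.restrict_apply (hg hB),
            inter_eq_right.2 sdiff_subset]
      _ = (ρ.restrict (g ⁻¹' B \ h ⁻¹' B)).map h B := by rw [heq]
      _ = 0 := by
          rw [Measure.map_apply hh hB, Measure.restrict_apply (hh hB), inter_sdiff_self,
            measure_empty]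
  filter_upwards [measure_eq_zero_iff_ae_notMem.1 hnull] with x hx hgx
  exact not_not.1 fun hhx => hx ⟨hgx, hhx⟩

theorem ae_eq_of_forall_map_restrict_eq [MeasurableSpace.CountablySeparated β]
    (hg : Measurable g) (hh : Measurable h)
    (heq : ∀ A, MeasurableSet A → (ρ.restrict A).map g = (ρ.restrict A).map h) : g =ᵐ[ρ] h := by
  refine Filter.EventuallyEq.of_forall_separating_mem_iff MeasurableSet fun B hB => ?_
  filter_upwards [
    ae_mem_imp_mem_of_map_restrict_eq hg hh hB (heq _ ((hg hB).diff (hh hB))),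
    ae_mem_imp_mem_of_map_restrict_eq hh hg hB (heq _ ((hh hB).diff (hg hB))).symm]
    with x hgh hhg
  exact ⟨hgh, hhg⟩

end SeparatingMaps

theorem uniqueness_of_Lagrangian_flows_from_CE_uniqueness_general {d : ℕ} {T m : ℝ} (hm : 0 ≤ m)
    {f : ℝ → EuclideanSpace ℝ (Fin d) → EuclideanSpace ℝ (Fin d)}
    (hf : Measurable (Function.uncurry f)) {S : Set (EuclideanSpace ℝ (Fin d))}
    (hS : MeasurableSet S)
    (hCEuniq : ∀ A ⊆ S, MeasurableSet A → 0 < volume A → volume A < ⊤ →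
      ∀ μ₁ μ₂ : ℝ → Measure (EuclideanSpace ℝ (Fin d)),
        IsCESolInClass d T m f μ₁ → IsCESolInClass d T m f μ₂ →
        μ₁ 0 = volume.restrict A → μ₂ 0 = volume.restrict A → ∀ t ∈ Icc (0 : ℝ) T, μ₁ t = μ₂ t)
    {Φ₁ Φ₂ : ℝ → EuclideanSpace ℝ (Fin d) → EuclideanSpace ℝ (Fin d)}
    (h₁ : IsLagrangianFlow d T m f S Φ₁) (h₂ : IsLagrangianFlow d T m f S Φ₂) {t : ℝ}
    (ht : t ∈ Icc 0 T) : Φ₁ t =ᵐ[volume.restrict S] Φ₂ t := by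
  have hT : 0 ≤ T := ht.1.trans ht.2
  refine ae_eq_of_forall_map_restrict_eq (h₁.measurable_apply t) (h₂.measurable_apply t)
    fun A hA => ?_
  rw [Measure.restrict_restrict hA]
  rcases eq_zero_or_pos (volume (A ∩ S)) with hnull | hpos
  · simp only [Measure.restrict_eq_zero.2 hnull, Measure.map_zero]
  have hle : (volume : Measure (EuclideanSpace ℝ (Fin d))).restrict (A ∩ S) ≤ volume.restrict S :=
    Measure.restrict_mono_set _ inter_subset_right
  exact hCEuniq (A ∩ S) inter_subset_right (hA.inter hS) hpos
    ((measure_mono inter_subset_right).trans_lt (h₁.volume_lt_top hT)) _ _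
    (h₁.isCESolInClass_map hT hm hf hle) (h₂.isCESolInClass_map hT hm hf hle)
    (h₁.map_zero hT hle.absolutelyContinuous) (h₂.map_zero hT hle.absolutelyContinuous) t ht

theorem uniqueness_of_Lagrangian_flows_from_CE_uniqueness
    (d : ℕ) (hd : 1 ≤ d) (T m : ℝ) (hT : 0 < T) (hm : 1 ≤ m)
    (f : ℝ → EuclideanSpace ℝ (Fin d) → EuclideanSpace ℝ (Fin d))
    (hf : Measurable (Function.uncurry f))
    (hCEuniq : ∀ S : Set (EuclideanSpace ℝ (Fin d)), MeasurableSet S →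
      0 < volume S → volume S < ⊤ →
      ∀ μ₁ μ₂ : ℝ → Measure (EuclideanSpace ℝ (Fin d)),
        IsCESolInClass d T m f μ₁ → IsCESolInClass d T m f μ₂ →
        μ₁ 0 = (volume : Measure (EuclideanSpace ℝ (Fin d))).restrict S →
        μ₂ 0 = (volume : Measure (EuclideanSpace ℝ (Fin d))).restrict S →
        ∀ t ∈ Icc (0 : ℝ) T, μ₁ t = μ₂ t) :
    ∀ S : Set (EuclideanSpace ℝ (Fin d)), MeasurableSet S →
      0 < volume S → volume S < ⊤ →
      ∀ Φ₁ Φ₂ : ℝ → EuclideanSpace ℝ (Fin d) → EuclideanSpace ℝ (Fin d),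
        IsLagrangianFlow d T m f S Φ₁ → IsLagrangianFlow d T m f S Φ₂ →
        ∀ t ∈ Icc (0 : ℝ) T,
          ∀ᵐ x ∂((volume : Measure (EuclideanSpace ℝ (Fin d))).restrict S),
            Φ₁ t x = Φ₂ t x :=
  fun _ hS _ _ _ _ h₁ h₂ _ ht =>
    uniqueness_of_Lagrangian_flows_from_CE_uniqueness_general (zero_le_one.trans hm) hf hS
      (fun A _ => hCEuniq A) h₁ h₂ ht

end
end

section
/- Let d ≥ 1 be an integer, α ∈ (−1,1), and define b : ℝ^d → ℝ^d by b(x) = −|x|^{α−1} x for 0 < |x| ≤ 1, b(x) = −x for |x| > 1, and b(0) = 0. Then for every x₀ ∈ ℝ^d: (existence) there exists a continuous function y : [0,∞) → ℝ^d such that s ↦ b(y(s)) is locally Lebesgue integrable and y(t) = x₀ + ∫₀^t b(y(s)) ds for all t ≥ 0; (uniqueness) any two such functions coincide; (coalescence) every such function satisfies y(t) = 0 for all t ≥ max(log|x₀|, 0) + 1/(1−α). -/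
open MeasureTheory Set
open scoped ENNReal

noncomputable section

/-- The inward-pointing drift `b(x) = -|x|^{α-1} x` for `0 < |x| ≤ 1`,
`b(x) = -x` for `|x| > 1`, and `b(0) = 0` (note `‖x‖ ^ (α-1) = 0` at `x = 0`
for the real power with negative exponent). -/
def bIn (d : ℕ) (α : ℝ) (x : EuclideanSpace ℝ (Fin d)) : EuclideanSpace ℝ (Fin d) :=
  if ‖x‖ ≤ 1 then -((‖x‖ ^ (α - 1)) • x) else -x

/-- `y` is a solution on `[0,∞)` of the ODE `y' = bIn d α (y)`, `y 0 = x₀`,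
in the integral sense, with locally integrable right-hand side. -/
def IsSolIn (d : ℕ) (α : ℝ) (x₀ : EuclideanSpace ℝ (Fin d))
    (y : ℝ → EuclideanSpace ℝ (Fin d)) : Prop :=
  ContinuousOn y (Ici 0) ∧
  (∀ t : ℝ, 0 ≤ t → IntegrableOn (fun s => bIn d α (y s)) (Icc 0 t)) ∧
  (∀ t : ℝ, 0 ≤ t → y t = x₀ + ∫ s in (0 : ℝ)..t, bIn d α (y s))

/-!
The velocity of `y' = -v(|y|) y/|y|` is a multiple of `y`, so as long as `y ≠ 0` the direction
`y/|y|` is constant and `|y|' = -v(|y|)`. Measuring the distance to the origin by the hitting time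
`T(r) = ∫₀^r ds / v(s)` turns the second equation into `T(|y|)' = -1`: the remaining time decreases
at unit rate until it vanishes, and being nonnegative it cannot leave `0` again. Hence
`T(|y(t)|) = max (T(|x₀|) - t) 0`, which determines `|y(t)|` because `T` is strictly increasing, and
conversely yields a solution upon inverting `T`.

For `v(r) = max (r^α) r` the hitting time is at most `T(1) = ∫₀^1 s^(-α) ds = 1/(1-α)` inside the
unit ball, and outside it exceeds this by `∫₁^r ds/s = log r`.
-/

open NormedSpace
open scoped Topology

section Calculus

variable {E : Type*} [NormedAddCommGroup E] [NormedSpace ℝ E]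

lemma eq_of_hasDerivAt_zero [CompleteSpace E] {f : ℝ → E} {a b : ℝ} (hab : a ≤ b)
    (hc : ContinuousOn f (Icc a b)) (hd : ∀ x ∈ Ioo a b, HasDerivAt f 0 x) : f b = f a := by
  have h := intervalIntegral.integral_eq_sub_of_hasDerivAt_of_le hab hc hd (by simp)
  simpa [eq_comm, sub_eq_zero] using h

lemma hasDerivAt_norm_of_hasDerivAt_smul {y : ℝ → E} {c t : ℝ} (h : HasDerivAt y (c • y t) t) :
    HasDerivAt (fun s => ‖y s‖) (c * ‖y t‖) t := by
  rw [hasDerivAt_iff_isLittleO] at h ⊢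
  have hpos : ∀ᶠ s in 𝓝 t, 0 < 1 + (s - t) * c := by
    refine Filter.Tendsto.eventually_const_lt (v := 1 + (t - t) * c) (by simp) ?_
    exact Continuous.tendsto (by fun_prop) t
  refine (Asymptotics.IsBigO.of_bound' ?_).trans_isLittleO h
  filter_upwards [hpos] with s hs
  -- `y s` is compared with its linearization `(1 + (s - t) c) y t`, whose norm is linear in `s`.
  have hnorm : ‖(1 + (s - t) * c) • y t‖ = (1 + (s - t) * c) * ‖y t‖ := by
    rw [norm_smul, Real.norm_of_nonneg hs.le]
  calc ‖‖y s‖ - ‖y t‖ - (s - t) • (c * ‖y t‖)‖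
      = |‖y s‖ - ‖(1 + (s - t) * c) • y t‖| := by
        rw [hnorm, Real.norm_eq_abs, smul_eq_mul]
        ring_nf
    _ ≤ ‖y s - (1 + (s - t) * c) • y t‖ := abs_norm_sub_norm_le _ _
    _ = ‖y s - y t - (s - t) • c • y t‖ := by rw [add_smul, one_smul, mul_smul, sub_sub]

lemma hasDerivAt_normalize_of_hasDerivAt_smul {y : ℝ → E} {c t : ℝ}
    (h : HasDerivAt y (c • y t) t) (h0 : y t ≠ 0) :
    HasDerivAt (fun s => normalize (y s)) 0 t := by
  have hn : ‖y t‖ ≠ 0 := norm_ne_zero_iff.2 h0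
  refine (((hasDerivAt_norm_of_hasDerivAt_smul h).inv hn).smul h).congr_deriv ?_
  rw [Pi.inv_apply, smul_smul, ← add_smul]
  refine smul_eq_zero_of_left ?_ _
  field_simp
  ring

lemma eq_max_sub_of_hasDerivAt_neg_one {φ : ℝ → ℝ} (hc : ContinuousOn φ (Ici 0))
    (hnonneg : ∀ t, 0 ≤ t → 0 ≤ φ t) (hd : ∀ t, 0 < t → φ t ≠ 0 → HasDerivAt φ (-1) t)
    {t : ℝ} (ht : 0 ≤ t) : φ t = max (φ 0 - t) 0 := by
  have unit_rate {a b : ℝ} (ha : 0 ≤ a) (hab : a ≤ b) (h : ∀ s ∈ Ioo a b, φ s ≠ 0) :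
      φ b + b = φ a + a := by
    refine eq_of_hasDerivAt_zero (f := fun s => φ s + s) hab
      ((hc.mono fun s hs => ha.trans hs.1).add continuousOn_id) fun s hs => ?_
    exact ((hd s (ha.trans_lt hs.1) (h s hs)).add (hasDerivAt_id s)).congr_deriv (neg_add_cancel 1)
  rcases (Icc 0 t ∩ φ ⁻¹' {0}).eq_empty_or_nonempty with hempty | hne
  · have h := unit_rate le_rfl ht fun s hs h0 =>
      (hempty.subset ⟨Ioo_subset_Icc_self hs, h0⟩ : s ∈ (∅ : Set ℝ))
    rw [max_eq_left] <;> linarith [hnonneg t ht]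
  · have hcompact : IsCompact (Icc 0 t ∩ φ ⁻¹' {0}) :=
      isCompact_Icc.of_isClosed_subset ((hc.mono Icc_subset_Ici_self).preimage_isClosed_of_isClosed
        isClosed_Icc isClosed_singleton) inter_subset_left
    obtain ⟨first, ⟨⟨hfirst0, hfirstt⟩, hφfirst : φ first = 0⟩, hleast⟩ :=
      hcompact.exists_isLeast hne
    obtain ⟨last, ⟨⟨hlast0, hlastt⟩, hφlast : φ last = 0⟩, hgreatest⟩ :=
      hcompact.exists_isGreatest hne
    have before := unit_rate le_rfl hfirst0 fun s hs h0 =>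
      hs.2.not_ge (hleast ⟨⟨hs.1.le, hs.2.le.trans hfirstt⟩, h0⟩)
    have after := unit_rate hlast0 hlastt fun s hs h0 =>
      hs.1.not_ge (hgreatest ⟨⟨hlast0.trans hs.1.le, hs.2.le⟩, h0⟩)
    rw [max_eq_right] <;> linarith [hnonneg t ht]

end Calculus

lemma exists_continuous_inverse_of_strictMonoOn_Icc {X Y : Type*}
    [ConditionallyCompleteLinearOrder X] [TopologicalSpace X] [OrderTopology X]
    [DenselyOrdered X] [LinearOrder Y] [TopologicalSpace Y] [OrderTopology Y]
    {f : X → Y} {a b : X} (hab : a ≤ b) (hc : ContinuousOn f (Icc a b))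
    (hf : StrictMonoOn f (Icc a b)) :
    ∃ g : Y → X, Continuous g ∧ ∀ z, g z ∈ Icc a b ∧ f (g z) = max (f a) (min (f b) z) := by
  have himage : f '' Icc a b = Icc (f a) (f b) := hc.image_Icc_of_monotoneOn hab hf.monotoneOn
  have hfab : f a ≤ f b := hf.monotoneOn (left_mem_Icc.2 hab) (right_mem_Icc.2 hab) hab
  let e : Icc a b ≃o Icc (f a) (f b) := (hf.orderIso f _).trans (OrderIso.setCongr _ _ himage)
  refine ⟨IccExtend hfab fun z => e.symm z, ?_, fun z => ⟨Subtype.coe_prop _, ?_⟩⟩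
  · exact (continuous_subtype_val.comp e.symm.continuous).Icc_extend'
  · exact congrArg Subtype.val (e.apply_symm_apply (projIcc _ _ hfab z))

section IntegralSolution

variable {E : Type*} [NormedAddCommGroup E] [NormedSpace ℝ E] {b : E → E} {x₀ : E} {y : ℝ → E}

/-- Integral (Carathéodory) solutions on `[0,∞)` of the autonomous ODE `y' = b(y)`, `y 0 = x₀`,
with values in a normed space; `y` is unconstrained on `(-∞,0)`. -/
structure IsIntegralSolution (b : E → E) (x₀ : E) (y : ℝ → E) : Prop where
  continuousOn : ContinuousOn y (Ici 0)
  integrableOn : ∀ t, 0 ≤ t → IntegrableOn (fun s => b (y s)) (Icc 0 t)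
  eq_add_integral : ∀ t, 0 ≤ t → y t = x₀ + ∫ s in (0 : ℝ)..t, b (y s)

namespace IsIntegralSolution

lemma apply_zero (hy : IsIntegralSolution b x₀ y) : y 0 = x₀ := by
  simpa using hy.eq_add_integral 0 le_rfl

lemma hasDerivAt [CompleteSpace E] (hy : IsIntegralSolution b x₀ y) {t : ℝ} (ht : 0 < t)
    (hb : ContinuousAt b (y t)) : HasDerivAt y (b (y t)) t := by
  have hcont : ContinuousAt (fun s => b (y s)) t :=
    ContinuousAt.comp (f := y) hb (hy.continuousOn.continuousAt (Ici_mem_nhds ht))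
  have hmeas : StronglyMeasurableAtFilter (fun s => b (y s)) (𝓝 t) :=
    ⟨Icc 0 (t + 1), Icc_mem_nhds ht (lt_add_one t), (hy.integrableOn (t + 1) (by positivity)).1⟩
  have hint : IntervalIntegrable (fun s => b (y s)) volume 0 t :=
    (intervalIntegrable_iff_integrableOn_Icc_of_le ht.le).2 (hy.integrableOn t ht.le)
  refine ((intervalIntegral.integral_hasDerivAt_right hint hmeas hcont).const_add
    x₀).congr_of_eventuallyEq ?_
  filter_upwards [Ioi_mem_nhds ht] with s hs
  exact hy.eq_add_integral s (le_of_lt hs)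

lemma of_hasDerivWithinAt_Ioi [CompleteSpace E] (hc : ContinuousOn y (Ici 0))
    (hint : ∀ t, 0 ≤ t → IntegrableOn (fun s => b (y s)) (Icc 0 t))
    (hd : ∀ t, 0 < t → HasDerivWithinAt y (b (y t)) (Ioi t) t) :
    IsIntegralSolution b (y 0) y where
  continuousOn := hc
  integrableOn := hint
  eq_add_integral t ht := by
    rw [intervalIntegral.integral_eq_sub_of_hasDeriv_right_of_le ht (hc.mono Icc_subset_Ici_self)
      (fun s hs => hd s hs.1) ((intervalIntegrable_iff_integrableOn_Icc_of_le ht).2 (hint t ht))]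
    abel

end IsIntegralSolution

end IntegralSolution

/-- The time `∫₀^r ds / v(s)` needed to travel from distance `r` to the origin when moving
radially inwards with speed `v(s)` at distance `s`. -/
def hittingTime (v : ℝ → ℝ) (r : ℝ) : ℝ := ∫ s in (0 : ℝ)..r, (v s)⁻¹

/-- Positive continuous speed profiles on `(0,∞)` for which the origin is reached in finite time,
i.e. `1/v` is integrable at `0`. The value `v 0` is irrelevant. -/
structure IsCoalescingSpeed (v : ℝ → ℝ) : Prop where
  continuousOn : ContinuousOn v (Ioi 0)
  pos : ∀ r, 0 < r → 0 < v r
  intervalIntegrable_inv : ∀ r, 0 < r → IntervalIntegrable (fun s => (v s)⁻¹) volume 0 r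

@[simp]
lemma hittingTime_zero (v : ℝ → ℝ) : hittingTime v 0 = 0 := intervalIntegral.integral_same

namespace IsCoalescingSpeed

variable {v : ℝ → ℝ} (hv : IsCoalescingSpeed v) {r : ℝ}

include hv

lemma continuousAt (hr : 0 < r) : ContinuousAt v r := hv.continuousOn.continuousAt (Ioi_mem_nhds hr)

lemma hasDerivAt_hittingTime (hr : 0 < r) : HasDerivAt (hittingTime v) (v r)⁻¹ r := by
  have hcont : ContinuousOn (fun s => (v s)⁻¹) (Ioi 0) :=
    hv.continuousOn.inv₀ fun s hs => (hv.pos s hs).ne'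
  exact intervalIntegral.integral_hasDerivAt_right (hv.intervalIntegrable_inv r hr)
    (hcont.stronglyMeasurableAtFilter isOpen_Ioi r hr) (hcont.continuousAt (Ioi_mem_nhds hr))

lemma continuousOn_hittingTime : ContinuousOn (hittingTime v) (Ici 0) := by
  intro r hr
  have hr1 : 0 < r + 1 := add_pos_of_nonneg_of_pos hr one_pos
  have h := intervalIntegral.continuousOn_primitive_interval'
    (hv.intervalIntegrable_inv (r + 1) hr1) left_mem_uIcc
  rw [uIcc_of_le hr1.le] at h
  refine (h r ⟨hr, (lt_add_one r).le⟩).mono_of_mem_nhdsWithin ?_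
  filter_upwards [self_mem_nhdsWithin, mem_nhdsWithin_of_mem_nhds (Iio_mem_nhds (lt_add_one r))]
    with s h0 h1 using ⟨h0, le_of_lt h1⟩

lemma strictMonoOn_hittingTime : StrictMonoOn (hittingTime v) (Ici 0) := by
  refine strictMonoOn_of_deriv_pos (convex_Ici 0) hv.continuousOn_hittingTime fun r hr => ?_
  rw [interior_Ici] at hr
  rw [(hv.hasDerivAt_hittingTime hr).deriv]
  exact inv_pos.2 (hv.pos r hr)

lemma hittingTime_nonneg (hr : 0 ≤ r) : 0 ≤ hittingTime v r := by
  simpa using hv.strictMonoOn_hittingTime.monotoneOn self_mem_Ici hr hr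

lemma hittingTime_eq_zero (hr : 0 ≤ r) : hittingTime v r = 0 ↔ r = 0 := by
  simpa using hv.strictMonoOn_hittingTime.injOn.eq_iff hr self_mem_Ici

lemma exists_continuous_hittingTime_eq {r₀ : ℝ} (hr₀ : 0 ≤ r₀) :
    ∃ r : ℝ → ℝ, Continuous r ∧ (∀ t, 0 ≤ r t) ∧
      ∀ t, 0 ≤ t → hittingTime v (r t) = max (hittingTime v r₀ - t) 0 := by
  obtain ⟨g, hg, hinv⟩ := exists_continuous_inverse_of_strictMonoOn_Icc hr₀
    (hv.continuousOn_hittingTime.mono Icc_subset_Ici_self)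
    (hv.strictMonoOn_hittingTime.mono Icc_subset_Ici_self)
  refine ⟨fun t => g (hittingTime v r₀ - t), by fun_prop, fun t => (hinv _).1.1, fun t ht => ?_⟩
  rw [(hinv _).2, hittingTime_zero, min_eq_right (sub_le_self _ ht), max_comm]

end IsCoalescingSpeed

section InwardDrift

variable {E : Type*} [NormedAddCommGroup E] [NormedSpace ℝ E] {v : ℝ → ℝ}

/-- The radial vector field pointing towards the origin with speed `v(|x|)`; it vanishes at `0`
because `normalize 0 = 0`. -/
def inwardDrift (v : ℝ → ℝ) (x : E) : E := -(v ‖x‖ • normalize x)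

@[simp]
lemma inwardDrift_zero (v : ℝ → ℝ) : inwardDrift v (0 : E) = 0 := by simp [inwardDrift]

lemma inwardDrift_eq_smul (v : ℝ → ℝ) (x : E) : inwardDrift v x = (-(v ‖x‖ / ‖x‖)) • x := by
  rw [inwardDrift, NormedSpace.normalize, smul_smul, neg_smul, div_eq_mul_inv]

lemma inwardDrift_of_pos (v : ℝ → ℝ) {r : ℝ} (hr : 0 < r) : inwardDrift v r = -v r := by
  rw [inwardDrift_eq_smul, Real.norm_of_nonneg hr.le, smul_eq_mul, neg_mul,
    div_mul_cancel₀ _ hr.ne']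

lemma inwardDrift_smul_normalize (v : ℝ → ℝ) (r : ℝ) (x : E) :
    inwardDrift v (r • normalize x) = inwardDrift v r • normalize x := by
  rcases eq_or_ne x 0 with rfl | hx
  · simp
  · simp only [inwardDrift_eq_smul, norm_smul, norm_normalize hx, mul_one, smul_assoc]

lemma continuousAt_inwardDrift {x : E} (hv : ContinuousAt v ‖x‖) (hx : x ≠ 0) :
    ContinuousAt (inwardDrift v) x := by
  have hspeed : ContinuousAt (fun x : E => v ‖x‖) x :=
    ContinuousAt.comp (f := fun x : E => ‖x‖) hv continuous_norm.continuousAt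
  have hnormalize : ContinuousAt (fun x : E => normalize x) x :=
    (continuous_norm.continuousAt.inv₀ (norm_ne_zero_iff.2 hx)).smul continuousAt_id
  exact (hspeed.smul hnormalize).neg

lemma IsIntegralSolution.smul_normalize [CompleteSpace E] {r₀ : ℝ} {r : ℝ → ℝ}
    (hr : IsIntegralSolution (inwardDrift v) r₀ r) (x : E) :
    IsIntegralSolution (inwardDrift v) (r₀ • normalize x) fun t => r t • normalize x where
  continuousOn := hr.continuousOn.smul continuousOn_const
  integrableOn t ht := by
    simp only [inwardDrift_smul_normalize]
    exact (hr.integrableOn t ht).smul_const (normalize x)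
  eq_add_integral t ht := by
    simp only [inwardDrift_smul_normalize]
    rw [intervalIntegral.integral_smul_const, ← add_smul, ← hr.eq_add_integral t ht]

section Existence

variable {r₀ : ℝ} {r : ℝ → ℝ}

lemma IsCoalescingSpeed.hasDerivWithinAt_Ioi_of_hittingTime_eq (hv : IsCoalescingSpeed v)
    (hc : ContinuousOn r (Ici 0)) (hnonneg : ∀ t, 0 ≤ t → 0 ≤ r t)
    (hT : ∀ t, 0 ≤ t → hittingTime v (r t) = max (hittingTime v r₀ - t) 0) {t : ℝ} (ht : 0 < t) :
    HasDerivWithinAt r (inwardDrift v (r t)) (Ioi t) t := by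
  rcases lt_or_ge t (hittingTime v r₀) with hlt | hge
  · have hpos : 0 < r t := (hnonneg t ht.le).lt_of_ne' fun h0 => by
      have h := hT t ht.le
      rw [h0, hittingTime_zero] at h
      linarith [le_max_left (hittingTime v r₀ - t) 0]
    have hcomp : hittingTime v ∘ r =ᶠ[𝓝 t] fun s => hittingTime v r₀ - s := by
      filter_upwards [Ioo_mem_nhds ht hlt] with s hs
      rw [Function.comp_apply, hT s hs.1.le, max_eq_left (sub_nonneg.2 hs.2.le)]
    have hd := HasDerivAt.of_comp_left (hc.continuousAt (Ici_mem_nhds ht))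
      (hv.hasDerivAt_hittingTime hpos) ((hasDerivAt_id t).const_sub _)
      (inv_pos.2 (hv.pos _ hpos)).ne' hcomp
    refine (hd.congr_deriv ?_).hasDerivWithinAt
    rw [inwardDrift_of_pos v hpos, neg_div, one_div, inv_inv]
  · have hzero (s : ℝ) (hs : t ≤ s) : r s = 0 := by
      have hs0 := ht.le.trans hs
      rw [← hv.hittingTime_eq_zero (hnonneg s hs0), hT s hs0, max_eq_right]
      linarith
    rw [hzero t le_rfl, inwardDrift_zero]
    exact (hasDerivWithinAt_const t _ 0).congr (fun s hs => hzero s (le_of_lt hs)) (hzero t le_rfl)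

lemma IsCoalescingSpeed.isIntegralSolution_of_hittingTime_eq (hv : IsCoalescingSpeed v)
    (hr₀ : 0 ≤ r₀) (hc : ContinuousOn r (Ici 0)) (hnonneg : ∀ t, 0 ≤ t → 0 ≤ r t)
    (hT : ∀ t, 0 ≤ t → hittingTime v (r t) = max (hittingTime v r₀ - t) 0) :
    IsIntegralSolution (inwardDrift v) r₀ r := by
  have hd (t : ℝ) (ht : 0 < t) := hv.hasDerivWithinAt_Ioi_of_hittingTime_eq hc hnonneg hT ht
  have hsign (t : ℝ) (ht : 0 ≤ t) : 0 ≤ -inwardDrift v (r t) := by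
    rcases (hnonneg t ht).eq_or_lt' with h | h
    · simp [h]
    · simpa [inwardDrift_of_pos v h] using (hv.pos _ h).le
  have hint (t : ℝ) : IntegrableOn (fun s => inwardDrift v (r s)) (Icc 0 t) := by
    rw [integrableOn_Icc_iff_integrableOn_Ioc]
    have h := intervalIntegral.integrableOn_deriv_right_of_nonneg (a := 0) (b := t)
      (hc.mono Icc_subset_Ici_self).neg (fun s hs => (hd s hs.1).neg) fun s hs => hsign s hs.1.le
    simpa using h.neg
  have hstart : r 0 = r₀ := by
    have h := hT 0 le_rfl
    rw [sub_zero, max_eq_left (hv.hittingTime_nonneg hr₀)] at h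
    exact hv.strictMonoOn_hittingTime.injOn (hnonneg 0 le_rfl) hr₀ h
  exact hstart ▸ .of_hasDerivWithinAt_Ioi hc (fun t _ => hint t) hd

lemma IsCoalescingSpeed.exists_isIntegralSolution [CompleteSpace E] (hv : IsCoalescingSpeed v)
    (x₀ : E) : ∃ y, IsIntegralSolution (inwardDrift v) x₀ y := by
  obtain ⟨r, hc, hnonneg, hT⟩ := hv.exists_continuous_hittingTime_eq (norm_nonneg x₀)
  have hr := hv.isIntegralSolution_of_hittingTime_eq (norm_nonneg x₀) hc.continuousOn
    (fun t _ => hnonneg t) hT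
  exact ⟨_, norm_smul_normalize x₀ ▸ hr.smul_normalize x₀⟩

end Existence

namespace IsIntegralSolution

variable [CompleteSpace E] {x₀ : E} {y : ℝ → E} {t : ℝ}

lemma hasDerivAt_smul_of_ne_zero (hv : IsCoalescingSpeed v)
    (hy : IsIntegralSolution (inwardDrift v) x₀ y) (ht : 0 < t) (h0 : y t ≠ 0) :
    HasDerivAt y ((-(v ‖y t‖ / ‖y t‖)) • y t) t := by
  simpa only [inwardDrift_eq_smul] using hy.hasDerivAt ht
    (continuousAt_inwardDrift (hv.continuousAt (norm_pos_iff.2 h0)) h0)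

lemma hittingTime_norm (hv : IsCoalescingSpeed v) (hy : IsIntegralSolution (inwardDrift v) x₀ y)
    (ht : 0 ≤ t) : hittingTime v ‖y t‖ = max (hittingTime v ‖x₀‖ - t) 0 := by
  rw [← hy.apply_zero]
  refine eq_max_sub_of_hasDerivAt_neg_one (φ := fun s => hittingTime v ‖y s‖)
    (hv.continuousOn_hittingTime.comp hy.continuousOn.norm fun s _ => norm_nonneg _)
    (fun s _ => hv.hittingTime_nonneg (norm_nonneg _)) (fun s hs hφ => ?_) ht
  have h0 : y s ≠ 0 := fun h => hφ (by simp [h])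
  have hn : 0 < ‖y s‖ := norm_pos_iff.2 h0
  refine ((hv.hasDerivAt_hittingTime hn).comp s
    (hasDerivAt_norm_of_hasDerivAt_smul (hy.hasDerivAt_smul_of_ne_zero hv hs h0))).congr_deriv ?_
  have := (hv.pos _ hn).ne'
  field_simp

lemma eq_zero_iff_hittingTime_le (hv : IsCoalescingSpeed v)
    (hy : IsIntegralSolution (inwardDrift v) x₀ y) (ht : 0 ≤ t) :
    y t = 0 ↔ hittingTime v ‖x₀‖ ≤ t := by
  rw [← norm_eq_zero, ← hv.hittingTime_eq_zero (norm_nonneg _), hy.hittingTime_norm hv ht,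
    max_eq_right_iff, sub_nonpos]

lemma eq_norm_smul_normalize (hv : IsCoalescingSpeed v)
    (hy : IsIntegralSolution (inwardDrift v) x₀ y) (ht : 0 ≤ t) :
    y t = ‖y t‖ • normalize x₀ := by
  by_cases h0 : y t = 0
  · simp [h0]
  have hne (s : ℝ) (hs : s ∈ Icc 0 t) : y s ≠ 0 := by
    rw [hy.eq_zero_iff_hittingTime_le hv ht] at h0
    exact fun h => h0 (((hy.eq_zero_iff_hittingTime_le hv hs.1).1 h).trans hs.2)
  have hc : ContinuousOn y (Icc 0 t) := hy.continuousOn.mono Icc_subset_Ici_self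
  have hdir : normalize (y t) = normalize (y 0) :=
    eq_of_hasDerivAt_zero (f := fun s => normalize (y s)) ht
      ((hc.norm.inv₀ fun s hs => norm_ne_zero_iff.2 (hne s hs)).smul hc) fun s hs =>
        have h0 := hne s (Ioo_subset_Icc_self hs)
        hasDerivAt_normalize_of_hasDerivAt_smul (hy.hasDerivAt_smul_of_ne_zero hv hs.1 h0) h0
  rw [← hy.apply_zero, ← hdir, norm_smul_normalize]

lemma eqOn (hv : IsCoalescingSpeed v) {y₁ y₂ : ℝ → E}
    (h₁ : IsIntegralSolution (inwardDrift v) x₀ y₁)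
    (h₂ : IsIntegralSolution (inwardDrift v) x₀ y₂) : EqOn y₁ y₂ (Ici 0) := by
  intro t ht
  have hnorm : ‖y₁ t‖ = ‖y₂ t‖ :=
    hv.strictMonoOn_hittingTime.injOn (norm_nonneg _) (norm_nonneg _)
      ((h₁.hittingTime_norm hv ht).trans (h₂.hittingTime_norm hv ht).symm)
  rw [h₁.eq_norm_smul_normalize hv ht, h₂.eq_norm_smul_normalize hv ht, hnorm]

end IsIntegralSolution

end InwardDrift

theorem inward_drift_wellposed_and_coalescence_general {E : Type*} [NormedAddCommGroup E]
    [NormedSpace ℝ E] [CompleteSpace E] {v : ℝ → ℝ} (hv : IsCoalescingSpeed v) (x₀ : E) :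
    (∃ y, IsIntegralSolution (inwardDrift v) x₀ y) ∧
    (∀ y₁ y₂, IsIntegralSolution (inwardDrift v) x₀ y₁ →
      IsIntegralSolution (inwardDrift v) x₀ y₂ → EqOn y₁ y₂ (Ici 0)) ∧
    (∀ y, IsIntegralSolution (inwardDrift v) x₀ y →
      ∀ t : ℝ, 0 ≤ t → (y t = 0 ↔ hittingTime v ‖x₀‖ ≤ t)) :=
  ⟨hv.exists_isIntegralSolution x₀, fun _ _ h₁ h₂ => h₁.eqOn hv h₂,
    fun _ hy _ ht => hy.eq_zero_iff_hittingTime_le hv ht⟩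

section PowerSpeed

variable {α : ℝ}

/-- The speed `|b(x)|` of the drift `bIn` at distance `r = |x| > 0`: for `α ≤ 1` it is `r ^ α`
if `r ≤ 1` and `r` if `1 ≤ r`. -/
def powerSpeed (α r : ℝ) : ℝ := max (r ^ α) r

lemma powerSpeed_of_le_one (hα : α ≤ 1) {r : ℝ} (h0 : 0 ≤ r) (h1 : r ≤ 1) :
    powerSpeed α r = r ^ α := by
  refine max_eq_left ?_
  rcases h0.eq_or_lt with rfl | hr
  · positivity
  · simpa using Real.rpow_le_rpow_of_exponent_ge hr h1 hα

lemma powerSpeed_of_one_le (hα : α ≤ 1) {r : ℝ} (h1 : 1 ≤ r) : powerSpeed α r = r :=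
  max_eq_right (by simpa using Real.rpow_le_rpow_of_exponent_le h1 hα)

lemma isCoalescingSpeed_powerSpeed (hα : α < 1) : IsCoalescingSpeed (powerSpeed α) where
  continuousOn := (continuousOn_id.rpow_const fun _ hr => .inl (ne_of_gt hr)).sup continuousOn_id
  pos r hr := lt_max_of_lt_right hr
  intervalIntegrable_inv r hr := by
    refine (intervalIntegral.intervalIntegrable_rpow' (r := -α) (by linarith)).mono_fun
      (by unfold powerSpeed; fun_prop) ?_
    refine (ae_restrict_iff' measurableSet_uIoc).2 (.of_forall fun s hs => ?_)
    rw [uIoc_of_le hr.le] at hs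
    have hpow : 0 < s ^ α := Real.rpow_pos_of_pos hs.1 α
    simp only [Real.rpow_neg hs.1.le, norm_inv]
    gcongr
    · exact norm_pos_iff.2 hpow.ne'
    · rw [Real.norm_of_nonneg hpow.le]
      exact (le_max_left _ _).trans (le_abs_self _)

lemma hittingTime_powerSpeed_one (hα : α < 1) : hittingTime (powerSpeed α) 1 = 1 / (1 - α) := by
  have h : EqOn (fun s => (powerSpeed α s)⁻¹) (fun s => s ^ (-α)) (uIcc 0 1) := fun s hs => by
    rw [uIcc_of_le zero_le_one] at hs
    simp only [powerSpeed_of_le_one hα.le hs.1 hs.2, Real.rpow_neg hs.1]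
  rw [hittingTime, intervalIntegral.integral_congr h, integral_rpow (.inl (by linarith)),
    neg_add_eq_sub, Real.one_rpow, Real.zero_rpow (by linarith), sub_zero]

lemma hittingTime_powerSpeed_of_one_le (hα : α < 1) {r : ℝ} (hr : 1 ≤ r) :
    hittingTime (powerSpeed α) r = Real.log r + 1 / (1 - α) := by
  have hv := isCoalescingSpeed_powerSpeed hα
  have hr0 : 0 < r := one_pos.trans_le hr
  have h : EqOn (fun s => (powerSpeed α s)⁻¹) (fun s => s⁻¹) (uIcc 1 r) := fun s hs => by
    rw [uIcc_of_le hr] at hs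
    simp only [powerSpeed_of_one_le hα.le hs.1]
  have hint := hv.intervalIntegrable_inv 1 one_pos
  have hsplit := intervalIntegral.integral_interval_sub_left (hv.intervalIntegrable_inv r hr0) hint
  rw [intervalIntegral.integral_congr h, integral_inv_of_pos one_pos hr0, div_one] at hsplit
  rw [← hittingTime_powerSpeed_one hα]
  exact sub_eq_iff_eq_add.1 hsplit

lemma hittingTime_powerSpeed_le (hα : α < 1) {r : ℝ} (hr : 0 ≤ r) :
    hittingTime (powerSpeed α) r ≤ max (Real.log r) 0 + 1 / (1 - α) := by
  rcases le_total r 1 with h1 | h1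
  · calc hittingTime (powerSpeed α) r
        ≤ hittingTime (powerSpeed α) 1 :=
          (isCoalescingSpeed_powerSpeed hα).strictMonoOn_hittingTime.monotoneOn hr
            (zero_le_one' ℝ) h1
      _ = 1 / (1 - α) := hittingTime_powerSpeed_one hα
      _ ≤ max (Real.log r) 0 + 1 / (1 - α) := le_add_of_nonneg_left (le_max_right _ _)
  · rw [hittingTime_powerSpeed_of_one_le hα h1]
    gcongr
    exact le_max_left _ _

lemma bIn_eq_inwardDrift (hα : α ≤ 1) (d : ℕ) : bIn d α = inwardDrift (powerSpeed α) := by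
  ext1 x
  rcases eq_or_ne x 0 with rfl | hx
  · simp [bIn]
  have hn : 0 < ‖x‖ := norm_pos_iff.2 hx
  rw [inwardDrift_eq_smul, bIn, neg_smul]
  split_ifs with h
  · rw [powerSpeed_of_le_one hα hn.le h, Real.rpow_sub_one hn.ne']
  · rw [powerSpeed_of_one_le hα (not_le.1 h).le, div_self hn.ne', one_smul]

lemma isSolIn_iff_isIntegralSolution (hα : α ≤ 1) {d : ℕ} {x₀ : EuclideanSpace ℝ (Fin d)}
    {y : ℝ → EuclideanSpace ℝ (Fin d)} :
    IsSolIn d α x₀ y ↔ IsIntegralSolution (inwardDrift (powerSpeed α)) x₀ y := by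
  rw [IsSolIn, bIn_eq_inwardDrift hα]
  exact ⟨fun ⟨hc, hint, heq⟩ => ⟨hc, hint, heq⟩, fun ⟨hc, hint, heq⟩ => ⟨hc, hint, heq⟩⟩

end PowerSpeed

theorem inward_drift_wellposed_and_coalescence (d : ℕ) (hd : 1 ≤ d)
    (α : ℝ) (hα : α ∈ Ioo (-1 : ℝ) 1) (x₀ : EuclideanSpace ℝ (Fin d)) :
    (∃ y, IsSolIn d α x₀ y) ∧
    (∀ y₁ y₂, IsSolIn d α x₀ y₁ → IsSolIn d α x₀ y₂ → EqOn y₁ y₂ (Ici 0)) ∧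
    (∀ y, IsSolIn d α x₀ y →
      ∀ t : ℝ, max (Real.log ‖x₀‖) 0 + 1 / (1 - α) ≤ t → y t = 0) := by
  have hv := isCoalescingSpeed_powerSpeed hα.2
  obtain ⟨hexists, hunique, hzero⟩ := inward_drift_wellposed_and_coalescence_general hv x₀
  simp only [isSolIn_iff_isIntegralSolution hα.2.le]
  refine ⟨hexists, hunique, fun y hy t ht => ?_⟩
  have hT := (hittingTime_powerSpeed_le hα.2 (norm_nonneg x₀)).trans ht
  exact (hzero y hy t ((hv.hittingTime_nonneg (norm_nonneg x₀)).trans hT)).2 hT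

end
end
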